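/- arXiv:2005.03548 — 2 statements merged into one kernel-verified Lean document; each statement's English description precedes it below -/
import Mathlib

section
/- Bi-parameter approximate weak factorization: Let K_i be standard Calderón–Zygmund kernels on ℝ^{d_i} with exponents α_i and constants C_{K_i} (i = 1,2), let c₀ > 0 and a₂ ≥ 1. There exist A₀ ≥ 3 and C > 0, depending only on d1, d2, α1, α2, C_{K1}, C_{K2}, c₀, a₂, such that the following holds for every A ≥ A₀. Let I_i, Ĩ_i ⊂ ℝ^{d_i} be cubes with ℓ(Ĩ_i) = ℓ(I_i) =: ℓ_i whose centers satisfy A·ℓ_i ≤ |c_{I_i} − c_{Ĩ_i}| ≤ a₂·A·ℓ_i and |K_i(c_{Ĩ_i}, c_{I_i})| ≥ (Aℓ_i)^{−d_i}/c₀. Write R = I1×I2. Let f ∈ L¹(ℝ^{d1}×ℝ^{d2}) vanish outside R with ∫_{I1} f(y1,x2) dy1 = 0 for a.e. x2 and ∫_{I2} f(x1,y2) dy2 = 0 for a.e. x1. Then there exist measurable functions h, f̃1, f̃2, f̃3 such that: (a) h vanishes outside R and |h| ≤ C·A^{d1+d2}·|f| a.e.; (b) f̃1 vanishes outside Ĩ1×I2,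 |f̃1(x1,x2)| ≤ C·A^{−α1}·1_{Ĩ1}(x1)·|I1|⁻¹∫_{I1}|f(y1,x2)|dy1, ∫_{Ĩ1} f̃1(y1,x2)dy1 = 0 for a.e. x2 and ∫_{I2} f̃1(x1,y2)dy2 = 0 for a.e. x1; (c) f̃2 vanishes outside I1×Ĩ2, |f̃2(x1,x2)| ≤ C·A^{−α2}·1_{Ĩ2}(x2)·|I2|⁻¹∫_{I2}|f(x1,y2)|dy2, ∫_{I1} f̃2(y1,x2)dy1 = 0 for a.e. x2 and ∫_{Ĩ2} f̃2(x1,y2)dy2 = 0 for a.e. x1; (d) f̃3 vanishes outside Ĩ1×Ĩ2, |f̃3| ≤ C·A^{−α1−α2}·|R|⁻¹∫_R|f|, ∫_{Ĩ1} f̃3(y1,x2)dy1 = 0 for a.e. x2 and ∫_{Ĩ2} f̃3(x1,y2)dy2 = 0 for a.e. x1; (e) for a.e. x = (x1,x2): f(x) = 1_{Ĩ1×Ĩ2}(x)·∬_R K1(x1,y1)K2(x2,y2)h(y1,y2)dy − 1_{Ĩ2}(x2)·(∫_{I2} K2(x2,y2)h(x1,y2)dy2)·(∫_{Ĩ1}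 K1(y1,x1)dy1) − 1_{Ĩ1}(x1)·(∫_{I1} K1(x1,y1)h(y1,x2)dy1)·(∫_{Ĩ2} K2(y2,x2)dy2) + h(x)·(∫_{Ĩ1} K1(y1,x1)dy1)·(∫_{Ĩ2} K2(y2,x2)dy2) + f̃1(x) + f̃2(x) + f̃3(x), with the convention that each displayed product is interpreted as 0 at points where its h-dependent factor vanishes. -/
/-! For a cube `J` far from `I` (center distance `≈ A ℓ`), the mass `a(y) = ∫_J K(x, y) dx` is
bounded below by a multiple of `A ^ (-d)` for `y ∈ I`: non-degeneracy at the centers survives on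
`J × I` because the kernel varies there only by `O(A ^ (-α))` relative to its size. Hence the
normalized kernel `k(x, y) = K(x, y) / a(y)` on `J × I` has integral one in `x` and oscillates in
`y` by `O(A ^ (-α)) / |I|` (`one_parameter`).

Let `k₁, k₂` be the normalized kernels in the two variables and `S₁, S₂` the corresponding integral
operators. If `g` has mean zero in each variable separately, so does `S₁ g`; the vanishing mean of
`g` also turns the oscillation bound of `k₁` into the size bound for `S₁ g` (`Nice.opFst`). The same
holds for `S₂`, and for `S₂` applied to `S₁ g`. With `h = f / (a₁ a₂)` the four terms of the
factorization are `S₂ S₁ f`, `S₂ f`, `S₁ f` and `f`, so the decomposition holds with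
`f̃₁ = S₁ f`, `f̃₂ = S₂ f`, `f̃₃ = -S₂ S₁ f`.

The bounds on the error terms are pointwise everywhere whereas cancellation of `f` is only almost
everywhere, so `f` is first replaced by an a.e. equal function whose slices are all integrable with
mean zero and not larger in `L¹` than those of `f` (`exists_nice`). -/

open MeasureTheory ENNReal Set

noncomputable section

/-- `Euc d` is the Euclidean space `ℝ^d`. -/
abbrev Euc (d : ℕ) := EuclideanSpace ℝ (Fin d)

/-- An axis-parallel cube in `ℝ^d`, described by its center and positive side length. -/
structure Cube (d : ℕ) where
  center : Euc d
  side : ℝ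
  side_pos : 0 < side

/-- The set of points of a cube. -/
def Cube.carrier {d : ℕ} (I : Cube d) : Set (Euc d) :=
  {x | ∀ i, |x i - I.center i| ≤ I.side / 2}

/-- The average `⟨b⟩_I` of a function over a cube. -/
def cubeAvg {d : ℕ} (b : Euc d → ℂ) (I : Cube d) : ℂ :=
  (volume I.carrier).toReal⁻¹ • ∫ x in I.carrier, b x

/-- The homogeneous Hölder seminorm `‖b‖_{Ċ^{0,α}}`, valued in `[0,∞]`. -/
def holderSeminorm {d : ℕ} (α : ℝ) (b : Euc d → ℂ) : ℝ≥0∞ :=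
  ⨆ (x : Euc d) (y : Euc d) (_ : x ≠ y), ENNReal.ofReal (‖b x - b y‖ / dist x y ^ α)
/-- The norm `‖b‖_{∙L^r}` = infimum over constants `c` of the `L^r` norm of `b - c`. -/
def dotLrNorm {d : ℕ} (r : ℝ) (b : Euc d → ℂ) : ℝ≥0∞ :=
  ⨅ c : ℂ, eLpNorm (fun x => b x - c) (ENNReal.ofReal r) volume

/-- The BMO norm of `b`, valued in `[0,∞]`. -/
def bmoNorm {d : ℕ} (b : Euc d → ℂ) : ℝ≥0∞ :=
  ⨆ I : Cube d, ENNReal.ofReal ((volume I.carrier).toReal⁻¹ * ∫ x in I.carrier, ‖b x - cubeAvg b I‖)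

/-- The sharp maximal function `M♯b`. -/
def sharpMaximal {d : ℕ} (b : Euc d → ℂ) (x : Euc d) : ℝ≥0∞ :=
  ⨆ (I : Cube d) (_ : x ∈ I.carrier),
    ENNReal.ofReal ((volume I.carrier).toReal⁻¹ * ∫ y in I.carrier, ‖b y - cubeAvg b I‖)

/-- A (countable) collection of cubes is sparse if each cube `Q` carries a measurable subset
`E Q` of at least half its measure, these subsets being pairwise disjoint. -/
def IsSparse {d : ℕ} (𝒮 : Set (Cube d)) : Prop :=
  𝒮.Countable ∧ ∃ E : Cube d → Set (Euc d),
    (∀ Q ∈ 𝒮, MeasurableSet (E Q) ∧ E Q ⊆ Q.carrier ∧ volume Q.carrier ≤ 2 * volume (E Q)) ∧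
    𝒮.PairwiseDisjoint E

/-- Average of `b (·, x2)` over a cube in the first factor. -/
def avgFst {d1 d2 : ℕ} (b : Euc d1 × Euc d2 → ℂ) (I1 : Cube d1) (x2 : Euc d2) : ℂ :=
  (volume I1.carrier).toReal⁻¹ • ∫ y1 in I1.carrier, b (y1, x2)

/-- Average of `b (x1, ·)` over a cube in the second factor. -/
def avgSnd {d1 d2 : ℕ} (b : Euc d1 × Euc d2 → ℂ) (I2 : Cube d2) (x1 : Euc d1) : ℂ :=
  (volume I2.carrier).toReal⁻¹ • ∫ y2 in I2.carrier, b (x1, y2)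

/-- Average of `b` over the rectangle `I1 × I2`. -/
def avgRect {d1 d2 : ℕ} (b : Euc d1 × Euc d2 → ℂ) (I1 : Cube d1) (I2 : Cube d2) : ℂ :=
  (volume (I1.carrier ×ˢ I2.carrier)).toReal⁻¹ • ∫ x in I1.carrier ×ˢ I2.carrier, b x

/-- The bi-parameter oscillation `osc^{1,1}(b, I1 × I2)`. -/
def osc11 {d1 d2 : ℕ} (b : Euc d1 × Euc d2 → ℂ) (I1 : Cube d1) (I2 : Cube d2) : ℝ :=
  ∫ x in I1.carrier ×ˢ I2.carrier,
    ‖b x - avgFst b I1 x.2 - avgSnd b I2 x.1 + avgRect b I1 I2‖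

/-- The `L^p` "norm" (with exponent `p ∈ [1,∞]`) of an `ℝ≥0∞`-valued function. -/
def lpNormENN {α : Type*} [MeasurableSpace α] (μ : Measure α) (p : ℝ≥0∞) (g : α → ℝ≥0∞) : ℝ≥0∞ :=
  if p = ∞ then essSup g μ else (∫⁻ x, g x ^ p.toReal ∂μ) ^ (1 / p.toReal)

/-- The mixed norm `‖F‖_{L^{v1}_{x1} L^{v2}_{x2}}`. -/
def mixedNorm {d1 d2 : ℕ} {E : Type*} [NormedAddCommGroup E] (v1 v2 : ℝ≥0∞)
    (F : Euc d1 × Euc d2 → E) : ℝ≥0∞ :=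
  lpNormENN volume v1 (fun x1 => lpNormENN volume v2 (fun x2 => (‖F (x1, x2)‖₊ : ℝ≥0∞)))

/-- The oscillation `osc^{v1,v2}(b, I1 × I2)` with general mixed exponents. -/
def oscMixed {d1 d2 : ℕ} (v1 v2 : ℝ≥0∞) (b : Euc d1 × Euc d2 → ℂ)
    (I1 : Cube d1) (I2 : Cube d2) : ℝ≥0∞ :=
  mixedNorm v1 v2 ((I1.carrier ×ˢ I2.carrier).indicator
    (fun x => b x - avgFst b I1 x.2 - avgSnd b I2 x.1 + avgRect b I1 I2))

/-- A standard Calderón–Zygmund kernel on `ℝ^n` with exponent `α` and constant `CK`. -/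
def IsCZKernel (n : ℕ) (α CK : ℝ) (K : Euc n → Euc n → ℂ) : Prop :=
  (∀ x y : Euc n, x ≠ y → ‖K x y‖ ≤ CK / dist x y ^ (n : ℝ)) ∧
  (∀ x x' y : Euc n, x ≠ y → dist x x' ≤ dist x y / 2 →
    ‖K x y - K x' y‖ + ‖K y x - K y x'‖ ≤ CK * dist x x' ^ α / dist x y ^ ((n : ℝ) + α))

/-- Symmetric non-degeneracy of a kernel with constant `c₀`. -/
def SymNonDeg (n : ℕ) (c₀ : ℝ) (K : Euc n → Euc n → ℂ) : Prop :=
  ∀ (y : Euc n) (r : ℝ), 0 < r → ∃ x : Euc n, r ≤ dist x y ∧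
    1 / (c₀ * r ^ (n : ℝ)) ≤ ‖K x y‖ ∧ 1 / (c₀ * r ^ (n : ℝ)) ≤ ‖K y x‖

/-- Distance between two sets in a metric space. -/
def setDist {α : Type*} [PseudoMetricSpace α] (s t : Set α) : ℝ :=
  sInf (Set.image2 dist s t)

/-- An admissible configuration: the rectangles `J1 × J2` and `L1 × L2` have matching side
lengths in each parameter, and separation comparable to the common side length, with
comparability constants `c1 ≤ c2`. -/
def IsAdmissible {d1 d2 : ℕ} (c1 c2 : ℝ) (J1 L1 : Cube d1) (J2 L2 : Cube d2) : Prop :=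
  J1.side = L1.side ∧ J2.side = L2.side ∧
  c1 * J1.side ≤ setDist J1.carrier L1.carrier ∧ setDist J1.carrier L1.carrier ≤ c2 * J1.side ∧
  c1 * J2.side ≤ setDist J2.carrier L2.carrier ∧ setDist J2.carrier L2.carrier ≤ c2 * J2.side

/-- The difference `B(x,y) = b(x1,x2) − b(x1,y2) − b(y1,x2) + b(y1,y2)`. -/
def biB {d1 d2 : ℕ} (b : Euc d1 × Euc d2 → ℂ) (x y : Euc d1 × Euc d2) : ℂ :=
  b (x.1, x.2) - b (x.1, y.2) - b (y.1, x.2) + b (y.1, y.2)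

/-- The bilinear form `Λ(f1, f2) = ∬ B(x,y) K1(x1,y1) K2(x2,y2) f1(y) f2(x) dy dx`. -/
def biCommForm {d1 d2 : ℕ} (b : Euc d1 × Euc d2 → ℂ) (K1 : Euc d1 → Euc d1 → ℂ)
    (K2 : Euc d2 → Euc d2 → ℂ) (f1 f2 : Euc d1 × Euc d2 → ℂ) : ℂ :=
  ∫ x : Euc d1 × Euc d2, ∫ y : Euc d1 × Euc d2,
    biB b x y * K1 x.1 y.1 * K2 x.2 y.2 * f1 y * f2 x

/-! ### Kernels and functions with cancellation -/

/-- A normalized kernel from functions on `I` to functions on `J`: it is supported over `J` in the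
output variable, oscillates by at most `ε` in the input variable over `I`, and has total mass one
in the output variable. -/
structure GoodKernel {X : Type*} [MeasureSpace X] (J I : Set X) (ε : ℝ) (k : X → X → ℂ) :
    Prop where
  meas : Measurable (Function.uncurry k)
  bdd : ∃ B : ℝ, ∀ x y, ‖k x y‖ ≤ B
  supp : ∀ x y, x ∉ J → k x y = 0
  osc : ∀ x, ∀ y ∈ I, ∀ y' ∈ I, ‖k x y - k x y'‖ ≤ ε
  mass : ∀ y ∈ I, ∫ x, k x y = 1

/-- An integrable function supported in `E1 × E2` all of whose slices (not merely almost all) are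
integrable with mean zero. -/
structure Nice {X Y : Type*} [MeasureSpace X] [MeasureSpace Y] (E1 : Set X) (E2 : Set Y)
    (g : X × Y → ℂ) : Prop where
  meas : Measurable g
  int : Integrable g (volume.prod volume)
  supp : ∀ x, x ∉ E1 ×ˢ E2 → g x = 0
  int1 : ∀ x2, Integrable (fun y1 => g (y1, x2))
  int2 : ∀ x1, Integrable (fun y2 => g (x1, y2))
  zero1 : ∀ x2, ∫ y1, g (y1, x2) = 0
  zero2 : ∀ x1, ∫ y2, g (x1, y2) = 0

/-- The integral operator with kernel `k` acting in the first variable. -/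
def opFst {X Y : Type*} [MeasureSpace X] (k : X → X → ℂ) (g : X × Y → ℂ) : X × Y → ℂ :=
  fun x => ∫ y1, k x.1 y1 * g (y1, x.2)

/-- The integral operator with kernel `k` acting in the second variable. -/
def opSnd {X Y : Type*} [MeasureSpace Y] (k : Y → Y → ℂ) (g : X × Y → ℂ) : X × Y → ℂ :=
  fun x => ∫ y2, k x.2 y2 * g (x.1, y2)

section Abstract

variable {X Y : Type*} [MeasureSpace X] [MeasureSpace Y]

lemma Nice.swap [SFinite (volume : Measure X)] [SFinite (volume : Measure Y)]
    {E1 : Set X} {E2 : Set Y} {g : X × Y → ℂ} (hg : Nice E1 E2 g) :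
    Nice E2 E1 (g ∘ Prod.swap) where
  meas := hg.meas.comp measurable_swap
  int := hg.int.swap
  supp _ hx := hg.supp _ (fun h => hx ⟨h.2, h.1⟩)
  int1 := hg.int2
  int2 := hg.int1
  zero1 := hg.zero2
  zero2 := hg.zero1

lemma GoodKernel.integrable_mul {J I : Set X} {ε : ℝ} {k : X → X → ℂ} (hk : GoodKernel J I ε k)
    {φ : X → ℂ} (hφ : Integrable φ) (x : X) : Integrable (fun y => k x y * φ y) := by
  obtain ⟨B, hB⟩ := hk.bdd
  exact hφ.bdd_mul (c := B) (hk.meas.comp measurable_prodMk_left).aestronglyMeasurable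
    (Filter.Eventually.of_forall fun y => hB x y)

/-- The mean-zero condition lets `k x y` be replaced by `k x y - k x y₀`, which is at most `ε`. -/
lemma GoodKernel.norm_apply_le {J I : Set X} {ε : ℝ} {k : X → X → ℂ} (hk : GoodKernel J I ε k)
    (hI : I.Nonempty) {φ : X → ℂ} (hφ : Integrable φ) (hs : ∀ y, y ∉ I → φ y = 0)
    (h0 : ∫ y, φ y = 0) (x : X) :
    ‖∫ y, k x y * φ y‖ ≤ ε * J.indicator (fun _ => (1 : ℝ)) x * ∫ y, ‖φ y‖ := by
  by_cases hx : x ∈ J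
  · obtain ⟨y₀, hy₀⟩ := hI
    have h1 : ∫ y, k x y * φ y = ∫ y, (k x y - k x y₀) * φ y := by
      simp_rw [sub_mul]
      rw [integral_sub (hk.integrable_mul hφ x) (hφ.const_mul _), integral_const_mul, h0]
      simp
    rw [h1, Set.indicator_of_mem hx, mul_one, ← integral_const_mul]
    refine norm_integral_le_of_norm_le (hφ.norm.const_mul _) (Filter.Eventually.of_forall fun y => ?_)
    rw [norm_mul]
    by_cases hy : y ∈ I
    · exact mul_le_mul_of_nonneg_right (hk.osc x y hy y₀ hy₀) (norm_nonneg _)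
    · simp [hs y hy]
  · simp [hk.supp x _ hx, Set.indicator_of_notMem hx]

/-- Acting with a normalized kernel in one variable preserves cancellation in both variables and
gains the factor `ε`. -/
lemma Nice.opFst [SFinite (volume : Measure X)] [SFinite (volume : Measure Y)]
    {J I : Set X} {E2 : Set Y} {ε : ℝ} {k : X → X → ℂ} {g : X × Y → ℂ}
    (hg : Nice I E2 g) (hk : GoodKernel J I ε k) (hI : I.Nonempty) (hJ : MeasurableSet J)
    (hJf : volume J ≠ ∞) :
    Nice J E2 (opFst k g) ∧ ∀ x : X × Y, ‖_root_.opFst k g x‖ ≤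
      ε * J.indicator (fun _ => (1 : ℝ)) x.1 * ∫ y1, ‖g (y1, x.2)‖ := by
  have hsupp : ∀ x2, ∀ y1, y1 ∉ I → g (y1, x2) = 0 := fun x2 y1 h =>
    hg.supp _ (fun h' => h h'.1)
  have hbd : ∀ x : X × Y, ‖_root_.opFst k g x‖ ≤
      ε * J.indicator (fun _ => (1 : ℝ)) x.1 * ∫ y1, ‖g (y1, x.2)‖ := fun x =>
    hk.norm_apply_le hI (hg.int1 x.2) (hsupp x.2) (hg.zero1 x.2) x.1
  obtain ⟨B, hB⟩ := hk.bdd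
  have hmeas : Measurable (_root_.opFst k g) := by
    have : Measurable (fun p : (X × Y) × X => k p.1.1 p.2 * g (p.2, p.1.2)) :=
      (hk.meas.comp (by fun_prop : Measurable fun p : (X × Y) × X => (p.1.1, p.2))).mul
        (hg.meas.comp (by fun_prop))
    exact (this.stronglyMeasurable.integral_prod_right (ν := (volume : Measure X))).measurable
  have hind : Integrable (J.indicator (fun _ => (1 : ℝ))) :=
    (integrable_indicator_iff hJ).2 (integrableOn_const hJf)
  have hgn : Integrable (fun x2 => ∫ y1, ‖g (y1, x2)‖) := hg.int.integral_norm_prod_right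
  -- the product of the indicator of `J` and the norm of the slices dominates the image
  have hint : Integrable (_root_.opFst k g) (volume.prod volume) := by
    refine Integrable.mono' ((hind.const_mul ε).mul_prod hgn) hmeas.aestronglyMeasurable
      (Filter.Eventually.of_forall hbd)
  refine ⟨⟨hmeas, hint, ?_, ?_, ?_, ?_, ?_⟩, hbd⟩
  · intro x hx
    by_cases h1 : x.1 ∈ J
    · have h2 : x.2 ∉ E2 := fun h => hx ⟨h1, h⟩
      have : ∀ y1, g (y1, x.2) = 0 := fun y1 => hg.supp _ (fun h => h2 h.2)
      simp [_root_.opFst, this]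
    · simp [_root_.opFst, hk.supp _ _ h1]
  · intro x2
    exact Integrable.mono' ((hind.const_mul ε).mul_const (∫ y1, ‖g (y1, x2)‖))
      (hmeas.comp measurable_prodMk_right).aestronglyMeasurable
      (Filter.Eventually.of_forall fun x1 => hbd (x1, x2))
  · intro x1
    exact Integrable.mono' (hgn.const_mul (ε * J.indicator (fun _ => (1 : ℝ)) x1))
      (hmeas.comp measurable_prodMk_left).aestronglyMeasurable
      (Filter.Eventually.of_forall fun x2 => hbd (x1, x2))
  · intro x2
    have hI2 : Integrable (Function.uncurry fun x1 y1 => k x1 y1 * g (y1, x2))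
        (volume.prod volume) := by
      refine Integrable.mono' (g := fun p : X × X => (J.indicator (fun _ => (1 : ℝ)) p.1) *
        (B * ‖g (p.2, x2)‖)) (hind.mul_prod ((hg.int1 x2).norm.const_mul B)) ?_ ?_
      · exact (hk.meas.mul (hg.meas.comp (by fun_prop :
          Measurable fun p : X × X => (p.2, x2)))).aestronglyMeasurable
      · refine Filter.Eventually.of_forall fun p => ?_
        by_cases h1 : p.1 ∈ J
        · simpa [h1, Function.uncurry] using
            mul_le_mul_of_nonneg_right (hB p.1 p.2) (norm_nonneg _)
        · simp [h1, Function.uncurry, hk.supp _ _ h1]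
    simp only [_root_.opFst]
    rw [integral_integral_swap hI2, ← hg.zero1 x2]
    refine integral_congr_ae (Filter.Eventually.of_forall fun y1 => ?_)
    simp only [integral_mul_const]
    by_cases hy : y1 ∈ I
    · rw [hk.mass y1 hy, one_mul]
    · simp [hsupp x2 y1 hy]
  · intro x1
    simp only [_root_.opFst]
    rw [integral_integral_swap]
    · simp_rw [integral_const_mul, hg.zero2]
      simp
    · exact hg.int.swap.bdd_mul (c := B) (f := fun p : Y × X => k x1 p.2)
        (hk.meas.comp (by fun_prop : Measurable fun p : Y × X => (x1, p.2))).aestronglyMeasurable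
        (Filter.Eventually.of_forall fun p => hB _ _)

lemma Nice.opSnd [SFinite (volume : Measure X)] [SFinite (volume : Measure Y)]
    {J I : Set Y} {E1 : Set X} {ε : ℝ} {k : Y → Y → ℂ} {g : X × Y → ℂ}
    (hg : Nice E1 I g) (hk : GoodKernel J I ε k) (hI : I.Nonempty) (hJ : MeasurableSet J)
    (hJf : volume J ≠ ∞) :
    Nice E1 J (opSnd k g) ∧ ∀ x : X × Y, ‖_root_.opSnd k g x‖ ≤
      ε * J.indicator (fun _ => (1 : ℝ)) x.2 * ∫ y2, ‖g (x.1, y2)‖ := by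
  obtain ⟨h1, h2⟩ := hg.swap.opFst hk hI hJ hJf
  exact ⟨h1.swap, fun x => h2 x.swap⟩

/-- Correcting `f` on a null set makes every slice integrable with mean zero, without increasing
the `L¹` norm of any slice. -/
lemma exists_nice [SFinite (volume : Measure X)] [SFinite (volume : Measure Y)]
    {I1 : Set X} {I2 : Set Y} (hI1 : MeasurableSet I1) (hI2 : MeasurableSet I2)
    {f : X × Y → ℂ} (hf : Integrable f (volume.prod volume))
    (hsupp : ∀ x, x ∉ I1 ×ˢ I2 → f x = 0)
    (h1 : ∀ᵐ x2, ∫ y1 in I1, f (y1, x2) = 0) (h2 : ∀ᵐ x1, ∫ y2 in I2, f (x1, y2) = 0) :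
    ∃ g : X × Y → ℂ, Nice I1 I2 g ∧ f =ᵐ[volume.prod volume] g ∧
      (∀ x2, ∫ y1, ‖g (y1, x2)‖ ≤ ∫ y1 in I1, ‖f (y1, x2)‖) ∧
      (∀ x1, ∫ y2, ‖g (x1, y2)‖ ≤ ∫ y2 in I2, ‖f (x1, y2)‖) := by
  obtain ⟨m, hm, hfm⟩ := hf.aestronglyMeasurable
  have hm := hm.measurable
  have e1 : ∀ x2 {E : Type} [NormedAddCommGroup E] [NormedSpace ℝ E] (F : ℂ → E), F 0 = 0 →
      ∫ y1 in I1, F (f (y1, x2)) = ∫ y1, F (f (y1, x2)) := by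
    intro x2 E _ _ F hF
    refine setIntegral_eq_integral_of_forall_compl_eq_zero fun y hy => ?_
    rw [hsupp _ (fun h => hy h.1), hF]
  have e2 : ∀ x1 {E : Type} [NormedAddCommGroup E] [NormedSpace ℝ E] (F : ℂ → E), F 0 = 0 →
      ∫ y2 in I2, F (f (x1, y2)) = ∫ y2, F (f (x1, y2)) := by
    intro x1 E _ _ F hF
    refine setIntegral_eq_integral_of_forall_compl_eq_zero fun y hy => ?_
    rw [hsupp _ (fun h => hy h.2), hF]
  have a2 : ∀ᵐ x1, Integrable (fun y2 => f (x1, y2)) ∧ (∀ᵐ y2, f (x1, y2) = m (x1, y2)) ∧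
      ∫ y2, f (x1, y2) = 0 := by
    filter_upwards [hf.prod_right_ae, Measure.ae_ae_of_ae_prod hfm, h2] with x1 u v w
    exact ⟨u, v, by rw [← w]; exact (e2 x1 id rfl).symm⟩
  have hfm' : ∀ᵐ p ∂((volume : Measure Y).prod (volume : Measure X)),
      f p.swap = m p.swap :=
    Measure.measurePreserving_swap.quasiMeasurePreserving.ae hfm
  have a1 : ∀ᵐ x2, Integrable (fun y1 => f (y1, x2)) ∧ (∀ᵐ y1, f (y1, x2) = m (y1, x2)) ∧
      ∫ y1, f (y1, x2) = 0 := by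
    filter_upwards [hf.prod_left_ae, Measure.ae_ae_of_ae_prod hfm', h1] with x2 u v w
    exact ⟨u, v, by rw [← w]; exact (e1 x2 id rfl).symm⟩
  obtain ⟨N1, hbad1, hN1, hN10⟩ := exists_measurable_superset_of_null (ae_iff.1 a2)
  obtain ⟨N2, hbad2, hN2, hN20⟩ := exists_measurable_superset_of_null (ae_iff.1 a1)
  have n1 : ∀ᵐ x1 : X, x1 ∉ N1 := measure_eq_zero_iff_ae_notMem.1 hN10
  have n2 : ∀ᵐ x2 : Y, x2 ∉ N2 := measure_eq_zero_iff_ae_notMem.1 hN20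
  set S : Set (X × Y) := (I1 \ N1) ×ˢ (I2 \ N2) with hS
  have hSm : MeasurableSet S := (hI1.diff hN1).prod (hI2.diff hN2)
  have key : ∀ x : X × Y, x.1 ∉ N1 → x.2 ∉ N2 → f x = m x → S.indicator m x = f x := by
    intro x h1 h2 h
    by_cases hx : x ∈ S
    · rw [Set.indicator_of_mem hx, h]
    · rw [Set.indicator_of_notMem hx, hsupp]
      exact fun h' => hx ⟨⟨h'.1, h1⟩, ⟨h'.2, h2⟩⟩
  have s1 : ∀ x2, (∀ y1, S.indicator m (y1, x2) = 0) ∨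
      (Integrable (fun y1 => f (y1, x2)) ∧ ∫ y1, f (y1, x2) = 0 ∧
        (fun y1 => S.indicator m (y1, x2)) =ᵐ[volume] fun y1 => f (y1, x2)) := by
    intro x2
    by_cases hx : x2 ∈ N2
    · exact Or.inl fun y1 => Set.indicator_of_notMem (fun h => h.2.2 hx) _
    · have := not_not.1 (fun h => hx (hbad2 h))
      refine Or.inr ⟨this.1, this.2.2, ?_⟩
      filter_upwards [n1, this.2.1] with y1 u v
      exact key _ u hx v
  have s2 : ∀ x1, (∀ y2, S.indicator m (x1, y2) = 0) ∨
      (Integrable (fun y2 => f (x1, y2)) ∧ ∫ y2, f (x1, y2) = 0 ∧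
        (fun y2 => S.indicator m (x1, y2)) =ᵐ[volume] fun y2 => f (x1, y2)) := by
    intro x1
    by_cases hx : x1 ∈ N1
    · exact Or.inl fun y1 => Set.indicator_of_notMem (fun h => h.1.2 hx) _
    · have := not_not.1 (fun h => hx (hbad1 h))
      refine Or.inr ⟨this.1, this.2.2, ?_⟩
      filter_upwards [n2, this.2.1] with y2 u v
      exact key _ hx u v
  have hfg : f =ᵐ[volume.prod volume] S.indicator m := by
    filter_upwards [hfm, Measure.quasiMeasurePreserving_fst.ae n1,
      Measure.quasiMeasurePreserving_snd.ae n2] with x u v w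
    exact (key x v w u).symm
  refine ⟨S.indicator m, ⟨hm.indicator hSm, hf.congr hfg, ?_, ?_, ?_, ?_, ?_⟩, hfg, ?_, ?_⟩
  · exact fun x hx => Set.indicator_of_notMem (fun h => hx ⟨h.1.1, h.2.1⟩) _
  · intro x2
    rcases s1 x2 with h | ⟨u, -, w⟩
    · simp [h]
    · exact u.congr w.symm
  · intro x1
    rcases s2 x1 with h | ⟨u, -, w⟩
    · simp [h]
    · exact u.congr w.symm
  · intro x2
    rcases s1 x2 with h | ⟨-, v, w⟩
    · simp [h]
    · rw [integral_congr_ae w, v]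
  · intro x1
    rcases s2 x1 with h | ⟨-, v, w⟩
    · simp [h]
    · rw [integral_congr_ae w, v]
  · intro x2
    rw [e1 x2 (fun z => ‖z‖) norm_zero]
    rcases s1 x2 with h | ⟨-, -, w⟩
    · simpa [h] using integral_nonneg fun y => norm_nonneg _
    · exact (integral_congr_ae (w.fun_comp norm)).le
  · intro x1
    rw [e2 x1 (fun z => ‖z‖) norm_zero]
    rcases s2 x1 with h | ⟨-, -, w⟩
    · simpa [h] using integral_nonneg fun y => norm_nonneg _
    · exact (integral_congr_ae (w.fun_comp norm)).le

end Abstract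

/-! ### Geometry of cubes -/

section Cubes

variable {d : ℕ}

lemma Cube.center_mem (I : Cube d) : I.center ∈ I.carrier := fun i => by
  simpa using (half_pos I.side_pos).le

lemma Cube.isClosed (I : Cube d) : IsClosed I.carrier := by
  simp only [Cube.carrier, Set.ofPred_forall]
  exact isClosed_iInter fun i => isClosed_le (by fun_prop) continuous_const

lemma Cube.measurableSet (I : Cube d) : MeasurableSet I.carrier := I.isClosed.measurableSet

lemma Cube.volume_carrier (I : Cube d) : volume I.carrier = ENNReal.ofReal I.side ^ d := by
  have h : I.carrier = (MeasurableEquiv.toLp 2 (Fin d → ℝ)).symm ⁻¹'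
      Set.Icc (fun i => I.center i - I.side / 2) (fun i => I.center i + I.side / 2) := by
    ext x
    simp only [Cube.carrier, Set.mem_ofPred_eq, Set.mem_preimage, Set.mem_Icc, Pi.le_def,
      ← forall_and]
    refine forall_congr' fun i => ?_
    rw [abs_le]
    change _ ↔ I.center i - I.side / 2 ≤ x i ∧ x i ≤ I.center i + I.side / 2
    constructor <;> rintro ⟨h1, h2⟩ <;> constructor <;> linarith
  rw [h, (EuclideanSpace.volume_preserving_symm_measurableEquiv_toLp (Fin d)).measure_preimage
    measurableSet_Icc.nullMeasurableSet, Real.volume_Icc_pi]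
  have : ∀ i, I.center i + I.side / 2 - (I.center i - I.side / 2) = I.side := fun i => by ring
  simp [this]

lemma Cube.volume_ne_top (I : Cube d) : volume I.carrier ≠ ∞ := by
  rw [I.volume_carrier]; exact ENNReal.pow_ne_top ENNReal.ofReal_ne_top

lemma Cube.volume_toReal (I : Cube d) : (volume I.carrier).toReal = I.side ^ d := by
  rw [I.volume_carrier, ENNReal.toReal_pow, ENNReal.toReal_ofReal I.side_pos.le]

lemma Cube.dist_center_le (I : Cube d) {x : Euc d} (hx : x ∈ I.carrier) :
    dist x I.center ≤ √d * I.side / 2 := by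
  rw [EuclideanSpace.dist_eq]
  have h : ∑ i, dist (x i) (I.center i) ^ 2 ≤ d * (I.side / 2) ^ 2 := by
    calc _ ≤ ∑ _i : Fin d, (I.side / 2) ^ 2 := Finset.sum_le_sum fun i _ => by
          rw [Real.dist_eq]; exact pow_le_pow_left₀ (abs_nonneg _) (hx i) 2
      _ = _ := by simp
  calc _ ≤ √(d * (I.side / 2) ^ 2) := Real.sqrt_le_sqrt h
    _ = _ := by
      rw [Real.sqrt_mul (Nat.cast_nonneg d), Real.sqrt_sq (half_pos I.side_pos).le]; ring

lemma Cube.dist_le (I : Cube d) {x y : Euc d} (hx : x ∈ I.carrier) (hy : y ∈ I.carrier) :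
    dist x y ≤ √d * I.side := by
  have := dist_triangle_right x y I.center
  have := I.dist_center_le hx
  have := I.dist_center_le hy
  linarith

lemma Cube.sep {A : ℝ} {I J : Cube d} (hs : J.side = I.side) (hA : 4 * √d ≤ A)
    (hd : A * I.side ≤ dist I.center J.center) {x y : Euc d} (hx : x ∈ J.carrier)
    (hy : y ∈ I.carrier) : A * I.side / 2 ≤ dist x y := by
  have h1 := J.dist_center_le hx
  have h2 := I.dist_center_le hy
  have h3 := dist_triangle4 I.center y x J.center
  rw [dist_comm I.center y, dist_comm y x] at h3
  rw [hs] at h1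
  have := mul_le_mul_of_nonneg_right hA I.side_pos.le
  have : 0 ≤ √d * I.side := mul_nonneg (Real.sqrt_nonneg _) I.side_pos.le
  linarith

end Cubes

/-! ### The normalized kernel of a Calderón–Zygmund kernel -/

section OneParameter

variable {d : ℕ}

lemma IsCZKernel.holder {α CK ρ : ℝ} (hα : 0 < α) (hCK : 0 ≤ CK) {K : Euc d → Euc d → ℂ}
    (hK : IsCZKernel d α CK K) (hρ : 0 < ρ) {x x' y : Euc d} (h1 : ρ ≤ dist x y)
    (h2 : dist x x' ≤ ρ / 2) :
    ‖K x y - K x' y‖ ≤ CK * dist x x' ^ α / ρ ^ ((d : ℝ) + α) ∧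
    ‖K y x - K y x'‖ ≤ CK * dist x x' ^ α / ρ ^ ((d : ℝ) + α) := by
  have h := hK.2 x x' y (dist_pos.1 (hρ.trans_le h1)) (by linarith)
  have h3 : CK * dist x x' ^ α / dist x y ^ ((d : ℝ) + α) ≤
      CK * dist x x' ^ α / ρ ^ ((d : ℝ) + α) := by
    gcongr
  constructor
  · linarith [norm_nonneg (K y x - K y x')]
  · linarith [norm_nonneg (K x y - K x' y)]

/-- The integral `∫_J K(x, y) dx` of the kernel over a cube in its first variable. -/
def kerMass (K : Euc d → Euc d → ℂ) (J : Cube d) (y : Euc d) : ℂ := ∫ x in J.carrier, K x y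

/-- The kernel `K(x, y) / ∫_J K(z, y) dz` on `J × I`, extended by zero. -/
def normKer (K : Euc d → Euc d → ℂ) (J I : Cube d) (x y : Euc d) : ℂ :=
  (J.carrier ×ˢ I.carrier).indicator (fun p => K p.1 p.2 / kerMass K J p.2) (x, y)

/-- On two distant cubes the mass of the kernel is at least of order `A ^ (-d)` and the normalized
kernel oscillates by `O(A ^ (-α))` relative to its size `|I|⁻¹`. -/
theorem one_parameter (d : ℕ) (α CK c₀ : ℝ) (hα : 0 < α) (hCK : 0 ≤ CK) (hc₀ : 0 < c₀) :
    ∃ A₀ C : ℝ, 3 ≤ A₀ ∧ 0 < C ∧ ∀ A, A₀ ≤ A → ∀ K : Euc d → Euc d → ℂ, IsCZKernel d α CK K →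
      ∀ I J : Cube d, J.side = I.side → A * I.side ≤ dist I.center J.center →
        (A * I.side) ^ (-(d : ℝ)) / c₀ ≤ ‖K J.center I.center‖ →
        Measurable (I.carrier.indicator (kerMass K J)) ∧
        (∀ y ∈ I.carrier, kerMass K J y ≠ 0 ∧ ‖kerMass K J y‖⁻¹ ≤ C * A ^ d) ∧
        GoodKernel J.carrier I.carrier (C * A ^ (-α) * (volume I.carrier).toReal⁻¹)
          (normKer K J I) := by
  set D : ℝ := CK * √d ^ α * 2 ^ ((d : ℝ) + α) with hD
  have hD0 : 0 ≤ D := by positivity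
  set Q : ℝ := 2 * c₀ with hQ
  have hQ0 : 0 < Q := by positivity
  refine ⟨max 3 (max (4 * √d) ((2 * Q * D) ^ α⁻¹)), Q + (D * Q + CK * 2 ^ d * D * Q ^ 2),
    le_max_left _ _, by positivity, ?_⟩
  intro A hA K hK I J hs hdist hlow
  have hA3 : 3 ≤ A := (le_max_left _ _).trans hA
  have hA4 : 4 * √d ≤ A := (le_max_left _ _).trans ((le_max_right _ _).trans hA)
  have hAD : 2 * Q * D ≤ A ^ α := by
    have h := (le_max_right _ _).trans ((le_max_right _ _).trans hA)
    have := Real.rpow_le_rpow (by positivity) h hα.le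
    rwa [← Real.rpow_mul (by positivity), inv_mul_cancel₀ hα.ne', Real.rpow_one] at this
  have hA0 : 0 < A := by linarith
  set l := I.side with hl
  have hl0 : 0 < l := I.side_pos
  set V := l ^ d with hV
  have hV0 : 0 < V := by positivity
  have hVI : (volume I.carrier).toReal = V := I.volume_toReal
  have hVJ : (volume J.carrier).toReal = V := by rw [J.volume_toReal, hs]
  -- `m` is the size of the kernel and `δ` its oscillation on `J × I`
  set m : ℝ := ((A * l) ^ d)⁻¹ with hm
  have hm0 : 0 < m := by positivity
  have hVm : V * m = (A ^ d)⁻¹ := by rw [hm, mul_pow, hV]; field_simp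
  set δ := D * A ^ (-α) * m with hδ
  have hδ0 : 0 ≤ δ := by positivity
  have hρ : 0 < A * l / 2 := by positivity
  have hdl : √d * l ≤ A * l / 2 / 2 := by
    have := mul_le_mul_of_nonneg_right hA4 hl0.le
    linarith
  have hδeq : CK * (√d * l) ^ α / (A * l / 2) ^ ((d : ℝ) + α) = δ := by
    rw [hδ, hm, hD, Real.div_rpow (by positivity) (by positivity),
      Real.mul_rpow (by positivity) (by positivity), Real.rpow_add (by positivity) (d : ℝ) α,
      Real.mul_rpow hA0.le hl0.le (z := α), Real.rpow_natCast, Real.rpow_neg hA0.le]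
    have := Real.rpow_pos_of_pos hl0 α
    have := Real.rpow_pos_of_pos hA0 α
    field_simp
  have hsep : ∀ x ∈ J.carrier, ∀ y ∈ I.carrier, A * l / 2 ≤ dist x y := fun x hx y hy =>
    Cube.sep hs hA4 hdist hx hy
  set E := CK / (A * l / 2) ^ ((d : ℝ) + α) with hE
  have hE0 : 0 ≤ E := by positivity
  have hol1 : ∀ x ∈ J.carrier, ∀ x' ∈ J.carrier, ∀ y ∈ I.carrier,
      ‖K x y - K x' y‖ ≤ E * dist x x' ^ α := by
    intro x hx x' hx' y hy
    have h := J.dist_le hx hx'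
    rw [hs] at h
    have := (hK.holder hα hCK hρ (hsep x hx y hy) (h.trans hdl)).1
    rwa [mul_div_right_comm] at this
  have hol2 : ∀ x ∈ J.carrier, ∀ y ∈ I.carrier, ∀ y' ∈ I.carrier,
      ‖K x y - K x y'‖ ≤ E * dist y y' ^ α := by
    intro x hx y hy y' hy'
    have h := I.dist_le hy hy'
    have h' := hsep x hx y hy
    rw [dist_comm] at h'
    have := (hK.holder hα hCK hρ h' (h.trans hdl)).2
    rwa [mul_div_right_comm] at this
  have hEδ : ∀ t : ℝ, 0 ≤ t → t ≤ √d * l → E * t ^ α ≤ δ := by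
    intro t ht h
    rw [← hδeq, mul_div_right_comm]
    gcongr
  have osc1 : ∀ x ∈ J.carrier, ∀ x' ∈ J.carrier, ∀ y ∈ I.carrier, ‖K x y - K x' y‖ ≤ δ :=
    fun x hx x' hx' y hy => (hol1 x hx x' hx' y hy).trans
      (hEδ _ dist_nonneg (by simpa only [hs] using J.dist_le hx hx'))
  have osc2 : ∀ x ∈ J.carrier, ∀ y ∈ I.carrier, ∀ y' ∈ I.carrier, ‖K x y - K x y'‖ ≤ δ :=
    fun x hx y hy y' hy' => (hol2 x hx y hy y' hy').trans (hEδ _ dist_nonneg (I.dist_le hy hy'))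
  have size : ∀ x ∈ J.carrier, ∀ y ∈ I.carrier, ‖K x y‖ ≤ CK * 2 ^ d * m := by
    intro x hx y hy
    have h := hsep x hx y hy
    refine (hK.1 x y (dist_pos.1 (hρ.trans_le h))).trans ?_
    rw [Real.rpow_natCast]
    calc CK / dist x y ^ d ≤ CK / (A * l / 2) ^ d := by gcongr
      _ = _ := by rw [hm, div_pow]; field_simp
  have hcont : ContinuousOn (fun p : Euc d × Euc d => K p.1 p.2) (J.carrier ×ˢ I.carrier) := by
    intro p hp
    rw [ContinuousWithinAt, tendsto_iff_norm_sub_tendsto_zero]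
    have hlim : Filter.Tendsto (fun q : Euc d × Euc d => E * dist q.1 p.1 ^ α +
        E * dist q.2 p.2 ^ α) (nhdsWithin p (J.carrier ×ˢ I.carrier)) (nhds 0) := by
      have : Continuous (fun q : Euc d × Euc d => E * dist q.1 p.1 ^ α + E * dist q.2 p.2 ^ α) :=
        ((continuous_const.mul ((by fun_prop : Continuous fun q : Euc d × Euc d =>
          dist q.1 p.1).rpow_const fun _ => Or.inr hα.le))).add
        ((continuous_const.mul ((by fun_prop : Continuous fun q : Euc d × Euc d =>
          dist q.2 p.2).rpow_const fun _ => Or.inr hα.le)))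
      have h := (this.tendsto p).mono_left (nhdsWithin_le_nhds (s := J.carrier ×ˢ I.carrier))
      simpa [Real.zero_rpow hα.ne'] using h
    refine squeeze_zero' (Filter.Eventually.of_forall fun q => norm_nonneg _) ?_ hlim
    filter_upwards [self_mem_nhdsWithin] with q hq
    calc ‖K q.1 q.2 - K p.1 p.2‖ = ‖(K q.1 q.2 - K p.1 q.2) + (K p.1 q.2 - K p.1 p.2)‖ := by
          congr 1; ring
      _ ≤ _ := (norm_add_le _ _).trans
        (add_le_add (hol1 _ hq.1 _ hp.1 _ hq.2) (hol2 _ hp.1 _ hq.2 _ hp.2))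
  have hprod : MeasurableSet (J.carrier ×ˢ I.carrier) := J.measurableSet.prod I.measurableSet
  have hKm : Measurable ((J.carrier ×ˢ I.carrier).indicator
      (fun p : Euc d × Euc d => K p.1 p.2)) := by
    classical
    rw [← Set.piecewise_eq_indicator]
    exact hcont.measurable_piecewise continuousOn_const hprod
  have hmass : I.carrier.indicator (kerMass K J) = fun y => ∫ x,
      (J.carrier ×ˢ I.carrier).indicator (fun p : Euc d × Euc d => K p.1 p.2) (x, y) := by
    funext y
    by_cases hy : y ∈ I.carrier
    · rw [Set.indicator_of_mem hy, kerMass, ← integral_indicator J.measurableSet]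
      refine integral_congr_ae (Filter.Eventually.of_forall fun x => ?_)
      by_cases hx : x ∈ J.carrier <;> simp [Set.indicator, hx, hy]
    · simp [Set.indicator, hy]
  have hbm : Measurable (I.carrier.indicator (kerMass K J)) := by
    rw [hmass]
    exact (hKm.stronglyMeasurable.integral_prod_left' (μ := (volume : Measure (Euc d)))).measurable
  have hKint : ∀ y ∈ I.carrier, IntegrableOn (fun x => K x y) J.carrier := by
    intro y hy
    have hc : ContinuousOn (fun x => K x y) J.carrier :=
      hcont.comp (f := fun x => (x, y)) (by fun_prop) (fun x hx => ⟨hx, hy⟩)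
    exact IntegrableOn.of_bound J.volume_ne_top.lt_top
      (hc.aestronglyMeasurable J.measurableSet) (CK * 2 ^ d * m)
      ((ae_restrict_iff' J.measurableSet).2 (Filter.Eventually.of_forall fun x hx => size x hx y hy))
  have hQm : Q⁻¹ * m ≤ m / c₀ - 2 * δ := by
    have : 2 * Q * δ ≤ m := by
      rw [hδ, Real.rpow_neg hA0.le]
      have hp := Real.rpow_pos_of_pos hA0 α
      calc 2 * Q * (D * (A ^ α)⁻¹ * m) = (2 * Q * D) / A ^ α * m := by field_simp
        _ ≤ 1 * m := by
          gcongr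
          exact (div_le_one hp).2 hAD
        _ = m := one_mul m
    have h1 : m / c₀ = 2 * (Q⁻¹ * m) := by rw [hQ]; field_simp
    have h2 : 2 * δ ≤ Q⁻¹ * m := by
      rw [← div_eq_inv_mul, le_div_iff₀ hQ0]; linarith
    linarith
  have hlow' : m / c₀ ≤ ‖K J.center I.center‖ := by
    rwa [Real.rpow_neg (by positivity), Real.rpow_natCast] at hlow
  have hmasslow : ∀ y ∈ I.carrier, V * m * Q⁻¹ ≤ ‖kerMass K J y‖ := by
    intro y hy
    have h1 : (V : ℂ) * K J.center I.center - kerMass K J y =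
        ∫ x in J.carrier, (K J.center I.center - K x y) := by
      have hci : IntegrableOn (fun _ : Euc d => K J.center I.center) J.carrier :=
        integrableOn_const J.volume_ne_top
      rw [integral_sub hci (hKint y hy), setIntegral_const,
        Measure.real, hVJ, kerMass, Complex.real_smul]
    have h2 : ‖(V : ℂ) * K J.center I.center - kerMass K J y‖ ≤ 2 * δ * V := by
      rw [h1, ← hVJ]
      refine norm_setIntegral_le_of_norm_le_const J.volume_ne_top.lt_top fun x hx => ?_
      calc ‖K J.center I.center - K x y‖
          = ‖(K J.center I.center - K x I.center) + (K x I.center - K x y)‖ := by congr 1; ring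
        _ ≤ δ + δ := (norm_add_le _ _).trans (add_le_add
            (osc1 _ J.center_mem _ hx _ I.center_mem) (osc2 _ hx _ I.center_mem _ hy))
        _ = 2 * δ := by ring
    have h3 := norm_sub_norm_le ((V : ℂ) * K J.center I.center) (kerMass K J y)
    rw [norm_mul, Complex.norm_real, Real.norm_of_nonneg hV0.le] at h3
    have h4 := mul_le_mul_of_nonneg_left hlow' hV0.le
    have h5 := mul_le_mul_of_nonneg_left hQm hV0.le
    nlinarith
  have hL0 : 0 < V * m * Q⁻¹ := by positivity
  have hne : ∀ y ∈ I.carrier, kerMass K J y ≠ 0 := fun y hy =>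
    norm_pos_iff.1 (hL0.trans_le (hmasslow y hy))
  have hinv : ∀ y ∈ I.carrier, ‖kerMass K J y‖⁻¹ ≤ (V * m * Q⁻¹)⁻¹ := fun y hy =>
    inv_anti₀ hL0 (hmasslow y hy)
  have hmassosc : ∀ y ∈ I.carrier, ∀ y' ∈ I.carrier,
      ‖kerMass K J y' - kerMass K J y‖ ≤ δ * V := by
    intro y hy y' hy'
    rw [kerMass, kerMass, ← integral_sub (hKint y' hy') (hKint y hy), ← hVJ]
    exact norm_setIntegral_le_of_norm_le_const J.volume_ne_top.lt_top fun x hx =>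
      osc2 x hx y' hy' y hy
  refine ⟨hbm, fun y hy => ⟨hne y hy, (hinv y hy).trans ?_⟩, ⟨?_, ?_, ?_, ?_, ?_⟩⟩
  · rw [hVm, mul_inv, inv_inv, inv_inv, mul_comm]
    have : 0 ≤ D * Q + CK * 2 ^ d * D * Q ^ 2 := by positivity
    gcongr
    linarith
  · have : Function.uncurry (normKer K J I) = fun p =>
        (J.carrier ×ˢ I.carrier).indicator (fun p : Euc d × Euc d => K p.1 p.2) p /
          I.carrier.indicator (kerMass K J) p.2 := by
      funext p
      by_cases hp : p ∈ J.carrier ×ˢ I.carrier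
      · simp only [Function.uncurry, normKer, Prod.mk.eta]
        rw [Set.indicator_of_mem hp, Set.indicator_of_mem hp, Set.indicator_of_mem hp.2]
      · simp only [Function.uncurry, normKer, Prod.mk.eta]
        rw [Set.indicator_of_notMem hp, Set.indicator_of_notMem hp, zero_div]
    rw [this]
    exact hKm.div (hbm.comp measurable_snd)
  · refine ⟨CK * 2 ^ d * m * (V * m * Q⁻¹)⁻¹, fun x y => ?_⟩
    by_cases hp : (x, y) ∈ J.carrier ×ˢ I.carrier
    · rw [normKer, Set.indicator_of_mem hp, norm_div, div_eq_mul_inv]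
      exact mul_le_mul (size x hp.1 y hp.2) (hinv y hp.2) (by positivity) (by positivity)
    · rw [normKer, Set.indicator_of_notMem hp, norm_zero]
      positivity
  · exact fun x y hx => Set.indicator_of_notMem (fun h => hx h.1) _
  · intro x y hy y' hy'
    by_cases hx : x ∈ J.carrier
    · rw [normKer, normKer, Set.indicator_of_mem (show (x, y) ∈ J.carrier ×ˢ I.carrier from ⟨hx, hy⟩),
        Set.indicator_of_mem (show (x, y') ∈ J.carrier ×ˢ I.carrier from ⟨hx, hy'⟩)]
      have h0 := hne y hy
      have h0' := hne y' hy'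
      have heq : K x y / kerMass K J y - K x y' / kerMass K J y' =
          (K x y - K x y') * (kerMass K J y)⁻¹ + K x y' *
            ((kerMass K J y' - kerMass K J y) * ((kerMass K J y)⁻¹ * (kerMass K J y')⁻¹)) := by
        field_simp
        ring
      dsimp only
      rw [heq, hVI]
      refine (norm_add_le _ _).trans ?_
      simp only [norm_mul, norm_inv]
      set L := (V * m * Q⁻¹)⁻¹ with hL
      calc _ ≤ δ * L + CK * 2 ^ d * m * (δ * V * (L * L)) := by
            have := osc2 x hx y hy y' hy'
            have := hinv y hy
            have := hinv y' hy'
            have := hmassosc y hy y' hy'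
            have := size x hx y' hy'
            gcongr
        _ = (D * Q + CK * 2 ^ d * D * Q ^ 2) * A ^ (-α) * V⁻¹ := by
            rw [hL, hδ]; field_simp
        _ ≤ (Q + (D * Q + CK * 2 ^ d * D * Q ^ 2)) * A ^ (-α) * V⁻¹ :=
            mul_le_mul_of_nonneg_right (mul_le_mul_of_nonneg_right (by linarith) (by positivity))
              (by positivity)
    · rw [normKer, normKer, Set.indicator_of_notMem (fun h => hx h.1),
        Set.indicator_of_notMem (fun h => hx h.1), sub_zero, norm_zero]
      positivity
  · intro y hy
    have : (fun x => normKer K J I x y) =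
        J.carrier.indicator (fun x => K x y * (kerMass K J y)⁻¹) := by
      funext x
      by_cases hx : x ∈ J.carrier <;> simp [normKer, Set.indicator, hx, hy, div_eq_mul_inv]
    rw [this, integral_indicator J.measurableSet, integral_mul_const]
    exact mul_inv_cancel₀ (hne y hy)

end OneParameter

/-! ### The bi-parameter factorization -/

/-- Bi-parameter approximate weak factorization. In parts of the decomposition below, products
whose `h`-dependent factor vanishes are to be interpreted as `0`; this convention is automatic
here since the Bochner integral of a non-integrable function is `0` in Lean, so each such
product vanishes at those points. -/
theorem statement10 (d1 d2 : ℕ) (hd1 : 1 ≤ d1) (hd2 : 1 ≤ d2)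
    (α1 α2 : ℝ) (hα1 : 0 < α1) (hα1' : α1 ≤ 1) (hα2 : 0 < α2) (hα2' : α2 ≤ 1)
    (CK1 CK2 : ℝ) (hCK1 : 0 ≤ CK1) (hCK2 : 0 ≤ CK2)
    (c₀ : ℝ) (hc₀ : 0 < c₀) (a₂ : ℝ) (ha₂ : 1 ≤ a₂) :
    ∃ A₀ C : ℝ, 3 ≤ A₀ ∧ 0 < C ∧
      ∀ A : ℝ, A₀ ≤ A →
      ∀ (K1 : Euc d1 → Euc d1 → ℂ) (K2 : Euc d2 → Euc d2 → ℂ),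
        IsCZKernel d1 α1 CK1 K1 → IsCZKernel d2 α2 CK2 K2 →
      ∀ (I1 Itil1 : Cube d1) (I2 Itil2 : Cube d2),
        Itil1.side = I1.side → Itil2.side = I2.side →
        A * I1.side ≤ dist I1.center Itil1.center →
        dist I1.center Itil1.center ≤ a₂ * A * I1.side →
        A * I2.side ≤ dist I2.center Itil2.center →
        dist I2.center Itil2.center ≤ a₂ * A * I2.side →
        (A * I1.side) ^ (-(d1 : ℝ)) / c₀ ≤ ‖K1 Itil1.center I1.center‖ →
        (A * I2.side) ^ (-(d2 : ℝ)) / c₀ ≤ ‖K2 Itil2.center I2.center‖ →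
      ∀ f : Euc d1 × Euc d2 → ℂ, MeasureTheory.Integrable f volume →
        (∀ x, x ∉ I1.carrier ×ˢ I2.carrier → f x = 0) →
        (∀ᵐ x2 ∂(volume : Measure (Euc d2)), ∫ y1 in I1.carrier, f (y1, x2) = 0) →
        (∀ᵐ x1 ∂(volume : Measure (Euc d1)), ∫ y2 in I2.carrier, f (x1, y2) = 0) →
        ∃ h ftil1 ftil2 ftil3 : Euc d1 × Euc d2 → ℂ,
          Measurable h ∧ Measurable ftil1 ∧ Measurable ftil2 ∧ Measurable ftil3 ∧
          -- (a)
          (∀ x, x ∉ I1.carrier ×ˢ I2.carrier → h x = 0) ∧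
          (∀ᵐ x ∂(volume : Measure (Euc d1 × Euc d2)),
            ‖h x‖ ≤ C * A ^ (d1 + d2) * ‖f x‖) ∧
          -- (b)
          (∀ x, x ∉ Itil1.carrier ×ˢ I2.carrier → ftil1 x = 0) ∧
          (∀ x : Euc d1 × Euc d2, ‖ftil1 x‖ ≤ C * A ^ (-α1) *
            Itil1.carrier.indicator (fun _ => (1 : ℝ)) x.1 *
            ((volume I1.carrier).toReal⁻¹ * ∫ y1 in I1.carrier, ‖f (y1, x.2)‖)) ∧
          (∀ᵐ x2 ∂(volume : Measure (Euc d2)), ∫ y1 in Itil1.carrier, ftil1 (y1, x2) = 0) ∧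
          (∀ᵐ x1 ∂(volume : Measure (Euc d1)), ∫ y2 in I2.carrier, ftil1 (x1, y2) = 0) ∧
          -- (c)
          (∀ x, x ∉ I1.carrier ×ˢ Itil2.carrier → ftil2 x = 0) ∧
          (∀ x : Euc d1 × Euc d2, ‖ftil2 x‖ ≤ C * A ^ (-α2) *
            Itil2.carrier.indicator (fun _ => (1 : ℝ)) x.2 *
            ((volume I2.carrier).toReal⁻¹ * ∫ y2 in I2.carrier, ‖f (x.1, y2)‖)) ∧
          (∀ᵐ x2 ∂(volume : Measure (Euc d2)), ∫ y1 in I1.carrier, ftil2 (y1, x2) = 0) ∧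
          (∀ᵐ x1 ∂(volume : Measure (Euc d1)), ∫ y2 in Itil2.carrier, ftil2 (x1, y2) = 0) ∧
          -- (d)
          (∀ x, x ∉ Itil1.carrier ×ˢ Itil2.carrier → ftil3 x = 0) ∧
          (∀ x : Euc d1 × Euc d2, ‖ftil3 x‖ ≤ C * A ^ (-α1 - α2) *
            ((volume (I1.carrier ×ˢ I2.carrier)).toReal⁻¹ *
              ∫ y in I1.carrier ×ˢ I2.carrier, ‖f y‖)) ∧
          (∀ᵐ x2 ∂(volume : Measure (Euc d2)), ∫ y1 in Itil1.carrier, ftil3 (y1, x2) = 0) ∧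
          (∀ᵐ x1 ∂(volume : Measure (Euc d1)), ∫ y2 in Itil2.carrier, ftil3 (x1, y2) = 0) ∧
          -- (e)
          (∀ᵐ x ∂(volume : Measure (Euc d1 × Euc d2)),
            f x = (Itil1.carrier ×ˢ Itil2.carrier).indicator (fun _ => (1 : ℂ)) x *
                    (∫ y in I1.carrier ×ˢ I2.carrier, K1 x.1 y.1 * K2 x.2 y.2 * h y)
              - Itil2.carrier.indicator (fun _ => (1 : ℂ)) x.2 *
                  (∫ y2 in I2.carrier, K2 x.2 y2 * h (x.1, y2)) *
                  (∫ y1 in Itil1.carrier, K1 y1 x.1)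
              - Itil1.carrier.indicator (fun _ => (1 : ℂ)) x.1 *
                  (∫ y1 in I1.carrier, K1 x.1 y1 * h (y1, x.2)) *
                  (∫ y2 in Itil2.carrier, K2 y2 x.2)
              + h x * (∫ y1 in Itil1.carrier, K1 y1 x.1) *
                  (∫ y2 in Itil2.carrier, K2 y2 x.2)
              + ftil1 x + ftil2 x + ftil3 x) := by
  obtain ⟨A1, C1, hA1, hC1, H1⟩ := one_parameter d1 α1 CK1 c₀ hα1 hCK1 hc₀
  obtain ⟨A2, C2, hA2, hC2, H2⟩ := one_parameter d2 α2 CK2 c₀ hα2 hCK2 hc₀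
  refine ⟨max A1 A2, C1 + C2 + C1 * C2, le_max_of_le_left hA1, by positivity, ?_⟩
  intro A hA K1 K2 hK1 hK2 I1 J1 I2 J2 hs1 hs2 hd1 _ hd2 _ hl1 hl2 f hf hfs hf1 hf2
  obtain ⟨m1, b1, G1⟩ := H1 A ((le_max_left _ _).trans hA) K1 hK1 I1 J1 hs1 hd1 hl1
  obtain ⟨m2, b2, G2⟩ := H2 A ((le_max_right _ _).trans hA) K2 hK2 I2 J2 hs2 hd2 hl2
  have hA0 : 0 < A := by linarith [(le_max_left _ _).trans hA]
  obtain ⟨g, hg, hfg, hn1, hn2⟩ :=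
    exists_nice I1.measurableSet I2.measurableSet hf hfs hf1 hf2
  set a1 := kerMass K1 J1 with ha1
  set a2 := kerMass K2 J2 with ha2
  set k1 := normKer K1 J1 I1 with hk1
  set k2 := normKer K2 J2 I2 with hk2
  obtain ⟨N1, B1⟩ := hg.opFst G1 ⟨_, I1.center_mem⟩ J1.measurableSet J1.volume_ne_top
  obtain ⟨N2, B2⟩ := hg.opSnd G2 ⟨_, I2.center_mem⟩ J2.measurableSet J2.volume_ne_top
  obtain ⟨N3, B3⟩ := N1.opSnd G2 ⟨_, I2.center_mem⟩ J2.measurableSet J2.volume_ne_top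
  set h : Euc d1 × Euc d2 → ℂ := fun x => g x * ((I1.carrier.indicator a1 x.1)⁻¹ *
    (I2.carrier.indicator a2 x.2)⁻¹) with hh
  have hhs : ∀ x, x ∉ I1.carrier ×ˢ I2.carrier → h x = 0 := fun x hx => by
    simp [hh, hg.supp x hx]
  have hhR : ∀ x, x.1 ∈ I1.carrier → x.2 ∈ I2.carrier →
      h x = g x * ((a1 x.1)⁻¹ * (a2 x.2)⁻¹) := fun x h1 h2 => by
    simp only [hh, Set.indicator_of_mem h1, Set.indicator_of_mem h2]
  -- on full slices and on slices over the supporting cube the integrals agree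
  have sl1 : ∀ {E1 : Cube d1} {E2 : Set (Euc d2)} {u : Euc d1 × Euc d2 → ℂ},
      Nice E1.carrier E2 u → ∀ x2, ∫ y1 in E1.carrier, u (y1, x2) = 0 := by
    intro E1 E2 u hu x2
    rw [setIntegral_eq_integral_of_forall_compl_eq_zero, hu.zero1]
    exact fun y hy => hu.supp _ (fun h => hy h.1)
  have sl2 : ∀ {E1 : Set (Euc d1)} {E2 : Cube d2} {u : Euc d1 × Euc d2 → ℂ},
      Nice E1 E2.carrier u → ∀ x1, ∫ y2 in E2.carrier, u (x1, y2) = 0 := by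
    intro E1 E2 u hu x1
    rw [setIntegral_eq_integral_of_forall_compl_eq_zero, hu.zero2]
    exact fun y hy => hu.supp _ (fun h => hy h.2)
  have hV1 : 0 ≤ (volume I1.carrier).toReal⁻¹ := by positivity
  have hV2 : 0 ≤ (volume I2.carrier).toReal⁻¹ := by positivity
  have hAα1 : 0 < A ^ (-α1) := Real.rpow_pos_of_pos hA0 _
  have hAα2 : 0 < A ^ (-α2) := Real.rpow_pos_of_pos hA0 _
  have hCC : 0 < C1 * C2 := mul_pos hC1 hC2
  have ind_nonneg : ∀ {Z : Type} (s : Set Z) (z : Z), 0 ≤ s.indicator (fun _ => (1 : ℝ)) z :=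
    fun s z => Set.indicator_nonneg (fun _ _ => zero_le_one) z
  have ind_le : ∀ {Z : Type} (s : Set Z) (z : Z), s.indicator (fun _ => (1 : ℝ)) z ≤ 1 :=
    fun s z => Set.indicator_le_self' (fun _ _ => zero_le_one) z
  have hnorm : ∫ y2, ∫ y1, ‖g (y1, y2)‖ = ∫ y in I1.carrier ×ˢ I2.carrier, ‖f y‖ := by
    rw [setIntegral_eq_integral_of_forall_compl_eq_zero (fun x hx => by rw [hfs x hx, norm_zero])]
    exact (integral_prod_symm _ hg.int.norm).symm.trans
      (integral_congr_ae (hfg.symm.fun_comp norm))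
  refine ⟨h, opFst k1 g, opSnd k2 g, fun x => -opSnd k2 (opFst k1 g) x, ?_, N1.meas, N2.meas,
    N3.meas.neg, hhs, ?_, N1.supp, ?_, ?_, ?_, N2.supp, ?_, ?_, ?_, ?_, ?_, ?_, ?_, ?_⟩
  · exact hg.meas.mul ((m1.comp measurable_fst).inv.mul (m2.comp measurable_snd).inv)
  · filter_upwards [hfg] with x hx
    rw [hx]
    by_cases hxR : x ∈ I1.carrier ×ˢ I2.carrier
    · rw [hhR x hxR.1 hxR.2, norm_mul, norm_mul, norm_inv, norm_inv, mul_comm, pow_add]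
      refine mul_le_mul_of_nonneg_right ?_ (norm_nonneg _)
      calc _ ≤ (C1 * A ^ d1) * (C2 * A ^ d2) :=
            mul_le_mul (b1 _ hxR.1).2 (b2 _ hxR.2).2 (by positivity) (by positivity)
        _ = (C1 * C2) * (A ^ d1 * A ^ d2) := by ring
        _ ≤ _ := mul_le_mul_of_nonneg_right (by linarith) (by positivity)
    · rw [hhs x hxR, norm_zero]
      positivity
  · intro x
    refine (B1 x).trans ?_
    have hi := ind_nonneg J1.carrier x.1
    calc _ ≤ C1 * A ^ (-α1) * (volume I1.carrier).toReal⁻¹ *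
          J1.carrier.indicator (fun _ => (1 : ℝ)) x.1 * ∫ y1 in I1.carrier, ‖f (y1, x.2)‖ :=
          mul_le_mul_of_nonneg_left (hn1 x.2) (by positivity)
      _ = C1 * (A ^ (-α1) * J1.carrier.indicator (fun _ => (1 : ℝ)) x.1 *
          ((volume I1.carrier).toReal⁻¹ * ∫ y1 in I1.carrier, ‖f (y1, x.2)‖)) := by ring
      _ ≤ (C1 + C2 + C1 * C2) * (A ^ (-α1) * J1.carrier.indicator (fun _ => (1 : ℝ)) x.1 *
          ((volume I1.carrier).toReal⁻¹ * ∫ y1 in I1.carrier, ‖f (y1, x.2)‖)) :=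
          mul_le_mul_of_nonneg_right (by linarith) (by positivity)
      _ = _ := by ring
  · exact Filter.Eventually.of_forall (sl1 N1)
  · exact Filter.Eventually.of_forall (sl2 N1)
  · intro x
    refine (B2 x).trans ?_
    have hi := ind_nonneg J2.carrier x.2
    calc _ ≤ C2 * A ^ (-α2) * (volume I2.carrier).toReal⁻¹ *
          J2.carrier.indicator (fun _ => (1 : ℝ)) x.2 * ∫ y2 in I2.carrier, ‖f (x.1, y2)‖ :=
          mul_le_mul_of_nonneg_left (hn2 x.1) (by positivity)
      _ = C2 * (A ^ (-α2) * J2.carrier.indicator (fun _ => (1 : ℝ)) x.2 *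
          ((volume I2.carrier).toReal⁻¹ * ∫ y2 in I2.carrier, ‖f (x.1, y2)‖)) := by ring
      _ ≤ (C1 + C2 + C1 * C2) * (A ^ (-α2) * J2.carrier.indicator (fun _ => (1 : ℝ)) x.2 *
          ((volume I2.carrier).toReal⁻¹ * ∫ y2 in I2.carrier, ‖f (x.1, y2)‖)) :=
          mul_le_mul_of_nonneg_right (by linarith) (by positivity)
      _ = _ := by ring
  · exact Filter.Eventually.of_forall (sl1 N2)
  · exact Filter.Eventually.of_forall (sl2 N2)
  · exact fun x hx => neg_eq_zero.2 (N3.supp x hx)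
  · intro x
    rw [norm_neg]
    refine (B3 x).trans ?_
    have hT : ∫ y2, ‖opFst k1 g (x.1, y2)‖ ≤ C1 * A ^ (-α1) * (volume I1.carrier).toReal⁻¹ *
        ∫ y in I1.carrier ×ˢ I2.carrier, ‖f y‖ := by
      rw [← hnorm, ← integral_const_mul]
      refine integral_mono (N1.int2 x.1).norm
        ((hg.int.integral_norm_prod_right).const_mul _) fun y2 => (B1 (x.1, y2)).trans ?_
      refine mul_le_mul_of_nonneg_right ?_ (by positivity)
      exact mul_le_of_le_one_right (by positivity) (ind_le _ _)
    have hvol : (volume (I1.carrier ×ˢ I2.carrier)).toReal⁻¹ =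
        (volume I1.carrier).toReal⁻¹ * (volume I2.carrier).toReal⁻¹ := by
      rw [Measure.volume_eq_prod, Measure.prod_prod, ENNReal.toReal_mul, mul_inv]
    have hrp : A ^ (-α1 - α2) = A ^ (-α1) * A ^ (-α2) := by
      rw [← Real.rpow_add hA0, sub_eq_add_neg]
    rw [hvol, hrp]
    calc _ ≤ C2 * A ^ (-α2) * (volume I2.carrier).toReal⁻¹ * 1 *
          (C1 * A ^ (-α1) * (volume I1.carrier).toReal⁻¹ *
            ∫ y in I1.carrier ×ˢ I2.carrier, ‖f y‖) :=
          mul_le_mul (mul_le_mul_of_nonneg_left (ind_le _ _) (by positivity)) hT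
            (by positivity) (by positivity)
      _ = (C1 * C2) * (A ^ (-α1) * A ^ (-α2) * ((volume I1.carrier).toReal⁻¹ *
          (volume I2.carrier).toReal⁻¹ * ∫ y in I1.carrier ×ˢ I2.carrier, ‖f y‖)) := by ring
      _ ≤ (C1 + C2 + C1 * C2) * (A ^ (-α1) * A ^ (-α2) * ((volume I1.carrier).toReal⁻¹ *
          (volume I2.carrier).toReal⁻¹ * ∫ y in I1.carrier ×ˢ I2.carrier, ‖f y‖)) :=
          mul_le_mul_of_nonneg_right (by linarith) (by positivity)
      _ = _ := by ring
  · refine Filter.Eventually.of_forall fun x2 => ?_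
    rw [integral_neg, sl1 N3, neg_zero]
  · refine Filter.Eventually.of_forall fun x1 => ?_
    rw [integral_neg, sl2 N3, neg_zero]
  · have T1 : ∀ x : Euc d1 × Euc d2,
        (J1.carrier ×ˢ J2.carrier).indicator (fun _ => (1 : ℂ)) x *
          (∫ y in I1.carrier ×ˢ I2.carrier, K1 x.1 y.1 * K2 x.2 y.2 * h y) =
        opSnd k2 (opFst k1 g) x := by
      intro x
      by_cases hx : x ∈ J1.carrier ×ˢ J2.carrier
      · rw [Set.indicator_of_mem hx, one_mul]
        have e : ∫ y in I1.carrier ×ˢ I2.carrier, K1 x.1 y.1 * K2 x.2 y.2 * h y =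
            ∫ y, k2 x.2 y.2 * (k1 x.1 y.1 * g y) := by
          rw [← integral_indicator (I1.measurableSet.prod I2.measurableSet)]
          refine integral_congr_ae (Filter.Eventually.of_forall fun y => ?_)
          by_cases hy : y ∈ I1.carrier ×ˢ I2.carrier
          · dsimp only
            rw [Set.indicator_of_mem hy, hhR y hy.1 hy.2, hk1, hk2, normKer, normKer,
              Set.indicator_of_mem (show (x.1, y.1) ∈ J1.carrier ×ˢ I1.carrier from
                ⟨hx.1, hy.1⟩),
              Set.indicator_of_mem (show (x.2, y.2) ∈ J2.carrier ×ˢ I2.carrier from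
                ⟨hx.2, hy.2⟩)]
            simp only [div_eq_mul_inv]
            ring
          · dsimp only
            rw [Set.indicator_of_notMem hy, hg.supp y hy, mul_zero, mul_zero]
        obtain ⟨P1, hP1⟩ := G1.bdd
        obtain ⟨P2, hP2⟩ := G2.bdd
        have hi : Integrable (fun y : Euc d1 × Euc d2 => k2 x.2 y.2 * (k1 x.1 y.1 * g y))
            (volume.prod volume) :=
          (hg.int.bdd_mul (c := P1) (f := fun y : Euc d1 × Euc d2 => k1 x.1 y.1)
            (G1.meas.comp (by fun_prop : Measurable fun y : Euc d1 × Euc d2 =>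
              (x.1, y.1))).aestronglyMeasurable
            (Filter.Eventually.of_forall fun y => hP1 _ _)).bdd_mul (c := P2)
            (f := fun y : Euc d1 × Euc d2 => k2 x.2 y.2)
            (G2.meas.comp (by fun_prop : Measurable fun y : Euc d1 × Euc d2 =>
              (x.2, y.2))).aestronglyMeasurable
            (Filter.Eventually.of_forall fun y => hP2 _ _)
        rw [e, Measure.volume_eq_prod, integral_prod_symm _ hi]
        simp only [opSnd, opFst, integral_const_mul]
      · rw [Set.indicator_of_notMem hx, zero_mul, N3.supp x hx]
    have T2 : ∀ x : Euc d1 × Euc d2,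
        J2.carrier.indicator (fun _ => (1 : ℂ)) x.2 *
          (∫ y2 in I2.carrier, K2 x.2 y2 * h (x.1, y2)) * a1 x.1 = opSnd k2 g x := by
      intro x
      by_cases hx : x ∈ I1.carrier ×ˢ J2.carrier
      · rw [Set.indicator_of_mem hx.2, one_mul, ← integral_mul_const,
          ← integral_indicator I2.measurableSet]
        refine integral_congr_ae (Filter.Eventually.of_forall fun y => ?_)
        by_cases hy : y ∈ I2.carrier
        · have hne := (b1 _ hx.1).1
          dsimp only
          rw [Set.indicator_of_mem hy, hhR (x.1, y) hx.1 hy, hk2, normKer,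
            Set.indicator_of_mem (show (x.2, y) ∈ J2.carrier ×ˢ I2.carrier from ⟨hx.2, hy⟩)]
          have hne2 := (b2 _ hy).1
          dsimp only
          rw [← ha2]
          field_simp
        · dsimp only
          rw [Set.indicator_of_notMem hy, hg.supp (x.1, y) (fun h => hy h.2), mul_zero]
      · rw [N2.supp x hx]
        by_cases hx2 : x.2 ∈ J2.carrier
        · have : ∀ y2, h (x.1, y2) = 0 := fun y2 => hhs _ fun h => hx ⟨h.1, hx2⟩
          simp [this]
        · simp [Set.indicator_of_notMem hx2]
    have T3 : ∀ x : Euc d1 × Euc d2,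
        J1.carrier.indicator (fun _ => (1 : ℂ)) x.1 *
          (∫ y1 in I1.carrier, K1 x.1 y1 * h (y1, x.2)) * a2 x.2 = opFst k1 g x := by
      intro x
      by_cases hx : x ∈ J1.carrier ×ˢ I2.carrier
      · rw [Set.indicator_of_mem hx.1, one_mul, ← integral_mul_const,
          ← integral_indicator I1.measurableSet]
        refine integral_congr_ae (Filter.Eventually.of_forall fun y => ?_)
        by_cases hy : y ∈ I1.carrier
        · have hne := (b2 _ hx.2).1
          dsimp only
          rw [Set.indicator_of_mem hy, hhR (y, x.2) hy hx.2, hk1, normKer,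
            Set.indicator_of_mem (show (x.1, y) ∈ J1.carrier ×ˢ I1.carrier from ⟨hx.1, hy⟩)]
          have hne2 := (b1 _ hy).1
          dsimp only
          rw [← ha1]
          field_simp
        · dsimp only
          rw [Set.indicator_of_notMem hy, hg.supp (y, x.2) (fun h => hy h.1), mul_zero]
      · rw [N1.supp x hx]
        by_cases hx2 : x.1 ∈ J1.carrier
        · have : ∀ y1, h (y1, x.2) = 0 := fun y1 => hhs _ fun h => hx ⟨hx2, h.2⟩
          simp [this]
        · simp [Set.indicator_of_notMem hx2]
    have T4 : ∀ x : Euc d1 × Euc d2, h x * a1 x.1 * a2 x.2 = g x := by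
      intro x
      by_cases hx : x ∈ I1.carrier ×ˢ I2.carrier
      · have hne1 := (b1 _ hx.1).1
        have hne2 := (b2 _ hx.2).1
        rw [hhR x hx.1 hx.2]
        field_simp
      · rw [hhs x hx, hg.supp x hx, zero_mul, zero_mul]
    filter_upwards [hfg] with x hx
    change f x = _ - _ * a1 x.1 - _ * a2 x.2 + h x * a1 x.1 * a2 x.2 + _ + _ + _
    rw [T1, T2, T3, T4, hx]
    ring
end
end

section
/- Let d1, d2 ≥ 1, let v1, v2 ∈ [1,∞] with conjugate exponents v1', v2', let R = I1×I2 be a rectangle in ℝ^{d1}×ℝ^{d2}, and let b : ℝ^{d1}×ℝ^{d2} → ℂ be measurable with ‖b·1_R‖_{L^{v1}_{x1}L^{v2}_{x2}} < ∞. Let S be the supremum of |∫_R b·f| over all measurable f supported in R with ‖f‖_{L^{v1'}_{x1}L^{v2'}_{x2}} ≤ 1, ∫_{I1} f(y1,x2) dy1 = 0 for a.e. x2, and ∫_{I2} f(x1,y2) dy2 = 0 for a.e. x1. Then S ≤ osc^{v1,v2}(b,R) ≤ 4S. -/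
/-!
Write `μ`, `ν` for Lebesgue measure restricted to the two cubes, and let `P b` be `b` minus its two
partial averages plus its total average (`biOsc`). On mixed-norm functions over the rectangle, `P`
is a projection onto the functions whose marginal integrals vanish, and `osc(b, R)` is the mixed
norm of `P b`.

Two properties of `P` carry the argument. It is symmetric, `∫ b · P f = ∫ P b · f`, by Fubini
(`integral_mul_biOsc`). And `‖P f‖ ≤ 4 ‖f‖` in every mixed norm (`mixN_biOsc_le`), because each of
the three averages is a contraction: for the average in the outer variable this is Minkowski's
integral inequality followed by Hölder's inequality, for the inner one Hölder's inequality alone.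

If `f` is an admissible test function, then `P f = f` almost everywhere, so
`|∫ b f| = |∫ P b · f| ≤ ‖P b‖` by the mixed Hölder inequality; this is `S ≤ osc`. Conversely, for
any `f₀` in the unit ball of the dual mixed norm, `P f₀ / 4` is admissible, hence
`|∫ P b · f₀| = 4 |∫ b · (P f₀ / 4)| ≤ 4 S`, and the converse of the mixed Hölder inequality
(`mixN_le_of_forall_lintegral_mul_le`) gives `osc ≤ 4 S`. That converse, including the endpoint
exponents, rests on norming functions for the sections of a function which depend measurably on the
parameter (`exists_norming_seq`).
-/

open MeasureTheory ENNReal Set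

noncomputable section

section Helpers

open Filter Topology

/-! ### Conjugate exponents -/

lemma holderConjugate_cases {p q : ℝ≥0∞} (h : p.HolderConjugate q) :
    (p = 1 ∧ q = ∞) ∨ (p = ∞ ∧ q = 1) ∨
      (p ≠ 0 ∧ p ≠ ∞ ∧ q ≠ 0 ∧ q ≠ ∞ ∧ p.toReal.HolderConjugate q.toReal) := by
  have h1 : p⁻¹ + q⁻¹ = 1 := ENNReal.holderConjugate_iff.1 h
  have hp0 : p ≠ 0 := by rintro rfl; simp at h1
  have hq0 : q ≠ 0 := by rintro rfl; simp at h1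
  by_cases hp : p = ∞
  · subst hp
    right; left
    simpa using h1
  by_cases hq : q = ∞
  · subst hq
    left
    simpa using h1
  refine Or.inr (Or.inr ⟨hp0, hp, hq0, hq, ?_⟩)
  have h2 : p.toReal⁻¹ + q.toReal⁻¹ = 1 := by
    have := congrArg ENNReal.toReal h1
    rwa [ENNReal.toReal_add (by simpa) (by simpa), ENNReal.toReal_inv, ENNReal.toReal_inv,
      ENNReal.toReal_one] at this
  have hp' : 0 < p.toReal := ENNReal.toReal_pos hp0 hp
  have hq' : 0 < q.toReal := ENNReal.toReal_pos hq0 hq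
  exact (Real.holderConjugate_iff_eq_conjExponent (by
    have : 0 < q.toReal⁻¹ := by positivity
    by_contra hc
    push Not at hc
    have := (one_le_inv₀ hp').2 hc
    linarith)).2 (by
      have : q.toReal⁻¹ = (p.toReal - 1) / p.toReal := by
        field_simp
        field_simp at h2
        linarith
      rw [← inv_inv q.toReal, this, inv_div])

lemma HolderConjugate.one_le_left {p q : ℝ≥0∞} (h : p.HolderConjugate q) : 1 ≤ p := by
  have h1 : p⁻¹ + q⁻¹ = 1 := ENNReal.holderConjugate_iff.1 h
  rw [← ENNReal.inv_le_one, ← h1]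
  exact le_self_add

/-! ### Hölder's inequality and averages in one variable -/

section OneVariable

variable {α : Type*} [MeasurableSpace α] {μ : Measure α}

/-- Hölder's inequality for `ℝ≥0∞`-valued functions, endpoint exponents included. -/
lemma lintegral_mul_le_eLpNorm {p q : ℝ≥0∞} (h : p.HolderConjugate q) {f g : α → ℝ≥0∞}
    (hf : Measurable f) (hg : Measurable g) :
    ∫⁻ x, f x * g x ∂μ ≤ eLpNorm f p μ * eLpNorm g q μ := by
  have key : ∀ f g : α → ℝ≥0∞, Measurable f →
      ∫⁻ x, f x * g x ∂μ ≤ eLpNorm f 1 μ * eLpNorm g ∞ μ := by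
    intro f g hf
    rw [eLpNorm_one_eq_lintegral_enorm, eLpNorm_exponent_top, eLpNormEssSup,
      ← lintegral_mul_const _ (by simpa using! hf)]
    refine lintegral_mono_ae ?_
    filter_upwards [ENNReal.ae_le_essSup (μ := μ) (fun x => ‖g x‖ₑ)] with x hx
    exact mul_le_mul' le_rfl hx
  rcases holderConjugate_cases h with ⟨rfl, rfl⟩ | ⟨rfl, rfl⟩ | ⟨hp0, hp, hq0, hq, hpq⟩
  · exact key f g hf
  · simpa only [mul_comm] using key g f hg
  · rw [eLpNorm_eq_lintegral_rpow_enorm_toReal hp0 hp,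
      eLpNorm_eq_lintegral_rpow_enorm_toReal hq0 hq]
    exact ENNReal.lintegral_mul_le_Lp_mul_Lq μ hpq hf.aemeasurable hg.aemeasurable

/-- Replacing a function by its average does not increase its `L^p` norm. -/
lemma eLpNorm_const_laverage_le [IsFiniteMeasure μ] {p q : ℝ≥0∞} (h : p.HolderConjugate q)
    {g : α → ℝ≥0∞} (hg : Measurable g) :
    eLpNorm (fun _ => ⨍⁻ x, g x ∂μ) p μ ≤ eLpNorm g p μ := by
  rcases eq_or_ne μ 0 with rfl | hμ
  · simp
  have hp0 : p ≠ 0 := (zero_lt_one.trans_le (HolderConjugate.one_le_left h)).ne'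
  have hq0 : q ≠ 0 := (zero_lt_one.trans_le (HolderConjugate.one_le_left h.symm)).ne'
  have hm0 : μ univ ≠ 0 := by simpa using hμ
  have hm : μ univ ≠ ∞ := measure_ne_top _ _
  have hH := lintegral_mul_le_eLpNorm (μ := μ) h hg (measurable_const (a := (1 : ℝ≥0∞)))
  rw [eLpNorm_const _ hq0 hμ] at hH
  simp only [mul_one, enorm_eq_self, one_mul] at hH
  rw [eLpNorm_const _ hp0 hμ, laverage_eq, enorm_eq_self]
  have hexp : 1 / q.toReal + 1 / p.toReal = 1 := by
    rcases holderConjugate_cases h with ⟨rfl, rfl⟩ | ⟨rfl, rfl⟩ | ⟨_, _, _, _, hpq⟩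
    · simp
    · simp
    · have := hpq.inv_add_inv_eq_one
      simp only [one_div]; linarith
  calc (∫⁻ x, g x ∂μ) / μ univ * μ univ ^ (1 / p.toReal)
      ≤ (eLpNorm g p μ * μ univ ^ (1 / q.toReal)) / μ univ * μ univ ^ (1 / p.toReal) := by gcongr
    _ = eLpNorm g p μ * ((μ univ ^ (1 / q.toReal) * μ univ ^ (1 / p.toReal)) * (μ univ)⁻¹) := by
        rw [div_eq_mul_inv]; ring
    _ = eLpNorm g p μ := by
        rw [← ENNReal.rpow_add _ _ hm0 hm, hexp, ENNReal.rpow_one, ENNReal.mul_inv_cancel hm0 hm,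
          mul_one]

end OneVariable

/-! ### Measurable families of norming functions and duality -/

section Extremizers

variable {X Y : Type*} [MeasurableSpace X] [MeasurableSpace Y] {μ : Measure X} {ν : Measure Y}

lemma measurable_eLpNorm_section [SFinite ν] {F : X × Y → ℝ≥0∞} (hF : Measurable F)
    {p : ℝ≥0∞} (hp0 : p ≠ 0) : Measurable fun x => eLpNorm (fun y => F (x, y)) p ν := by
  by_cases hp : p = ∞
  · subst hp
    simp only [eLpNorm_exponent_top, eLpNormEssSup, enorm_eq_self]
    refine measurable_of_Ioi fun a => ?_
    -- The essential supremum exceeds `a` iff the superlevel set at `a` has positive measure.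
    have : (fun x => essSup (fun y => F (x, y)) ν) ⁻¹' Ioi a
        = {x | ν (Prod.mk x ⁻¹' (F ⁻¹' Ioi a)) ≠ 0} := by
      ext x
      simp only [mem_preimage, mem_Ioi, mem_ofPred_eq]
      rw [← not_le, not_iff_not]
      constructor
      · intro hx
        have := ENNReal.ae_le_essSup (μ := ν) (fun y => F (x, y))
        rw [← nonpos_iff_eq_zero, ← (ae_iff.1 this)]
        refine measure_mono fun y hy => ?_
        simp only [mem_preimage, mem_Ioi, mem_ofPred_eq, not_le] at hy ⊢
        exact hx.trans_lt hy
      · intro hx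
        refine essSup_le_of_ae_le _ ?_
        change ∀ᵐ y ∂ν, F (x, y) ≤ a
        rw [ae_iff]
        simpa [Set.preimage, not_le] using! hx
    rw [this]
    exact (measurable_measure_prodMk_left (hF measurableSet_Ioi)) (measurableSet_singleton 0).compl
  · simp only [eLpNorm_eq_lintegral_rpow_enorm_toReal hp0 hp, enorm_eq_self]
    exact (Measurable.lintegral_prod_right' (hF.pow_const _)).pow_const _

/-- Norming functions for the `L^p` norms of the sections of `F`, depending measurably on the
parameter `x`: the approximation by pairings holds simultaneously for all `x`. -/
lemma exists_norming_seq [IsFiniteMeasure ν] {F : X × Y → ℝ≥0∞} (hF : Measurable F)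
    {p q : ℝ≥0∞} (h : p.HolderConjugate q) :
    ∃ g : ℕ → X × Y → ℝ≥0∞, (∀ n, Measurable (g n)) ∧
      (∀ n x, eLpNorm (fun y => g n (x, y)) q ν ≤ 1) ∧
      ∀ x, eLpNorm (fun y => F (x, y)) p ν ≤
        liminf (fun n => ∫⁻ y, F (x, y) * g n (x, y) ∂ν) atTop := by
  rcases holderConjugate_cases h with ⟨rfl, rfl⟩ | ⟨rfl, rfl⟩ | ⟨hp0, hp, hq0, hq, hpq⟩
  · refine ⟨fun _ _ => 1, fun _ => measurable_const, fun n x => ?_, fun x => ?_⟩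
    · rcases eq_or_ne ν 0 with rfl | hν
      · simp
      · simp [eLpNorm_const _ _ hν]
    · simp [eLpNorm_one_eq_lintegral_enorm]
  · -- For `p = ∞`, use normalized indicators of superlevel sets of the sections of `F`.
    set φ : X → ℝ≥0∞ := fun x => eLpNorm (fun y => F (x, y)) ∞ ν with hφ
    have hφm : Measurable φ := measurable_eLpNorm_section hF (by simp)
    -- Thresholds tending to `φ x`, strictly below it when `φ x` and `n` are positive.
    set c : ℕ → ℝ≥0∞ := fun n => 1 - (n + 1 : ℝ≥0∞)⁻¹ with hc
    set a : ℕ → X → ℝ≥0∞ := fun n x => min (φ x) n * c n with ha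
    have ham : ∀ n, Measurable (a n) := fun n => (hφm.min measurable_const).mul_const _
    set E : ℕ → Set (X × Y) := fun n => {z | a n z.1 < F z} with hE
    have hEm : ∀ n, MeasurableSet (E n) := fun n =>
      measurableSet_lt ((ham n).comp measurable_fst) hF
    set m : ℕ → X → ℝ≥0∞ := fun n x => ν (Prod.mk x ⁻¹' E n) with hm
    have hmm : ∀ n, Measurable (m n) := fun n => measurable_measure_prodMk_left (hEm n)
    have hsec : ∀ n x, MeasurableSet (Prod.mk x ⁻¹' E n) := fun n x =>
      measurable_prodMk_left (hEm n)
    have hg : ∀ n x y, (E n).indicator (fun z => (m n z.1)⁻¹) (x, y)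
        = (Prod.mk x ⁻¹' E n).indicator (fun _ => (m n x)⁻¹) y := fun n x y => by
      simp [Set.indicator, mem_preimage]
    refine ⟨fun n => (E n).indicator fun z => (m n z.1)⁻¹, fun n =>
      (((hmm n).comp measurable_fst).inv).indicator (hEm n), fun n x => ?_, fun x => ?_⟩
    · simp only [eLpNorm_one_eq_lintegral_enorm, enorm_eq_self, hg]
      rw [lintegral_indicator_const (hsec n x)]
      exact ENNReal.inv_mul_le_one _
    · have hlim : Tendsto (fun n => a n x) atTop (𝓝 (φ x)) := by
        have h1 : Tendsto (fun n : ℕ => min (φ x) (n : ℝ≥0∞)) atTop (𝓝 (min (φ x) ∞)) :=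
          tendsto_const_nhds.min ENNReal.tendsto_nat_nhds_top
        have h2 : Tendsto c atTop (𝓝 (1 - 0)) := by
          refine ENNReal.Tendsto.sub tendsto_const_nhds ?_ (by simp)
          have := (tendsto_add_atTop_iff_nat 1).2 ENNReal.tendsto_inv_nat_nhds_zero
          simpa using! this
        have := ENNReal.Tendsto.mul h1 (by simp) h2 (by simp)
        simpa using this
      rcases eq_or_ne (φ x) 0 with h0 | h0
      · exact h0.le.trans zero_le
      refine hlim.liminf_eq.symm.le.trans (liminf_le_liminf ?_)
      filter_upwards [eventually_ge_atTop 1] with n hn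
      have hlt : a n x < φ x := by
        have hcn : c n < 1 := ENNReal.sub_lt_self (by simp) (by simp) (by simp)
        have hmin0 : min (φ x) (n : ℝ≥0∞) ≠ 0 := by
          rw [ne_eq, ← nonpos_iff_eq_zero, min_le_iff]
          simp only [nonpos_iff_eq_zero, not_or]
          exact ⟨h0, by simp; omega⟩
        have hmint : min (φ x) (n : ℝ≥0∞) ≠ ∞ :=
          ((min_le_right _ _).trans_lt (ENNReal.natCast_lt_top n)).ne
        calc a n x < min (φ x) n * 1 := ENNReal.mul_lt_mul_right hmin0 hmint hcn
          _ ≤ φ x := by rw [mul_one]; exact min_le_left _ _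
      have hm0 : m n x ≠ 0 := by
        intro hz
        refine not_le.2 hlt ?_
        change eLpNorm _ _ _ ≤ _
        rw [eLpNorm_exponent_top]
        refine essSup_le_of_ae_le _ ?_
        change ∀ᵐ y ∂ν, ‖F (x, y)‖ₑ ≤ a n x
        rw [ae_iff]
        simpa [m, E, Set.preimage, not_le] using! hz
      calc a n x = a n x * ((m n x)⁻¹ * m n x) := by
            rw [ENNReal.inv_mul_cancel hm0 (measure_ne_top _ _), mul_one]
        _ = ∫⁻ y, a n x * (Prod.mk x ⁻¹' E n).indicator (fun _ => (m n x)⁻¹) y ∂ν := by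
            rw [lintegral_const_mul _ (measurable_const.indicator (hsec n x)),
              lintegral_indicator_const (hsec n x)]
        _ ≤ _ := by
            refine lintegral_mono fun y => ?_
            dsimp only
            rw [hg]
            by_cases hy : y ∈ Prod.mk x ⁻¹' E n
            · gcongr
              exact le_of_lt hy
            · simp [hy]
  · -- Truncate `F` at height `n` and use the extremizer of Hölder's inequality.
    set T : ℕ → X × Y → ℝ≥0∞ := fun n z => min (F z) n with hT
    have hTm : ∀ n, Measurable (T n) := fun n => hF.min measurable_const
    set φ : ℕ → X → ℝ≥0∞ := fun n x => ∫⁻ y, T n (x, y) ^ p.toReal ∂ν with hφ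
    have hφm : ∀ n, Measurable (φ n) := fun n =>
      Measurable.lintegral_prod_right' ((hTm n).pow_const _)
    have hTs : ∀ n x, Measurable fun y => T n (x, y) ^ p.toReal := fun n x =>
      ((hTm n).comp measurable_prodMk_left).pow_const _
    have hφt : ∀ n x, φ n x ≠ ∞ := fun n x => by
      refine ((lintegral_mono (g := fun _ => (n : ℝ≥0∞) ^ p.toReal) fun y => ?_).trans_lt ?_).ne
      · exact ENNReal.rpow_le_rpow (min_le_right _ _) hpq.nonneg
      · rw [lintegral_const]
        exact ENNReal.mul_lt_top (ENNReal.rpow_lt_top_of_nonneg hpq.nonneg (by simp))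
          (measure_lt_top _ _)
    refine ⟨fun n z => T n z ^ (p.toReal - 1) * (φ n z.1)⁻¹ ^ (1 / q.toReal), fun n =>
      ((hTm n).pow_const _).mul ((((hφm n).comp measurable_fst).inv).pow_const _),
      fun n x => ?_, fun x => ?_⟩
    · rw [eLpNorm_eq_lintegral_rpow_enorm_toReal hq0 hq]
      refine (ENNReal.rpow_le_one ?_ (by simp))
      have : ∀ y, ‖T n (x, y) ^ (p.toReal - 1) * (φ n x)⁻¹ ^ (1 / q.toReal)‖ₑ ^ q.toReal
          = T n (x, y) ^ p.toReal * (φ n x)⁻¹ := fun y => by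
        rw [enorm_eq_self, ENNReal.mul_rpow_of_nonneg _ _ hpq.symm.nonneg, ← ENNReal.rpow_mul,
          ← ENNReal.rpow_mul, hpq.sub_one_mul_conj, one_div_mul_cancel hpq.symm.ne_zero,
          ENNReal.rpow_one]
      simp only [this]
      rw [lintegral_mul_const _ (hTs n x)]
      exact ENNReal.mul_inv_le_one _
    · have hlim : Tendsto (fun n => φ n x ^ (1 / p.toReal)) atTop
          (𝓝 (eLpNorm (fun y => F (x, y)) p ν)) := by
        rw [eLpNorm_eq_lintegral_rpow_enorm_toReal hp0 hp]
        refine (ENNReal.continuous_rpow_const.tendsto _).comp ?_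
        refine lintegral_tendsto_of_tendsto_of_monotone
          (fun n => (hTs n x).aemeasurable) ?_ ?_
        · refine ae_of_all _ fun y i j hij => ?_
          exact ENNReal.rpow_le_rpow (min_le_min le_rfl (by exact_mod_cast hij)) hpq.nonneg
        · refine ae_of_all _ fun y => (ENNReal.continuous_rpow_const.tendsto _).comp ?_
          have : Tendsto (fun n : ℕ => min (F (x, y)) (n : ℝ≥0∞)) atTop
              (𝓝 (min (F (x, y)) ∞)) := tendsto_const_nhds.min ENNReal.tendsto_nat_nhds_top
          simpa using this
      refine hlim.liminf_eq.symm.le.trans (liminf_le_liminf (Eventually.of_forall fun n => ?_))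
      dsimp only
      rcases eq_or_ne (φ n x) 0 with h0 | h0
      · rw [h0, ENNReal.zero_rpow_of_pos (by simpa using hpq.pos)]; exact zero_le
      calc φ n x ^ (1 / p.toReal) = φ n x * (φ n x)⁻¹ ^ (1 / q.toReal) := by
            rw [ENNReal.inv_rpow, ← ENNReal.rpow_neg]
            nth_rewrite 2 [← ENNReal.rpow_one (φ n x)]
            rw [← ENNReal.rpow_add _ _ h0 (hφt n x)]
            congr 1
            have := hpq.inv_add_inv_eq_one
            simp only [one_div]; linarith
        _ = ∫⁻ y, T n (x, y) ^ p.toReal * (φ n x)⁻¹ ^ (1 / q.toReal) ∂ν := by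
            rw [lintegral_mul_const _ (hTs n x)]
        _ ≤ _ := by
            refine lintegral_mono fun y => ?_
            dsimp only
            rw [← mul_assoc]
            gcongr
            calc T n (x, y) ^ p.toReal = T n (x, y) * T n (x, y) ^ (p.toReal - 1) := by
                  nth_rewrite 2 [← ENNReal.rpow_one (T n (x, y))]
                  rw [← ENNReal.rpow_add_of_nonneg _ _ zero_le_one (sub_nonneg.2 hpq.lt.le)]
                  congr 1; ring
              _ ≤ _ := by gcongr; exact min_le_left _ _

/-- The converse of Hölder's inequality in one variable. -/
lemma eLpNorm_le_of_forall_lintegral_mul_le [IsFiniteMeasure ν] {f : Y → ℝ≥0∞}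
    (hf : Measurable f) {p q : ℝ≥0∞} (h : p.HolderConjugate q) {C : ℝ≥0∞}
    (hC : ∀ g : Y → ℝ≥0∞, Measurable g → eLpNorm g q ν ≤ 1 → ∫⁻ y, f y * g y ∂ν ≤ C) :
    eLpNorm f p ν ≤ C := by
  obtain ⟨g, hgm, hg1, hg⟩ := exists_norming_seq (X := Unit) (ν := ν)
    (hf.comp measurable_snd) h
  refine (hg ()).trans (liminf_le_of_le (by isBoundedDefault) fun c hc => ?_)
  obtain ⟨n, hn⟩ := hc.exists
  exact hn.trans (hC _ ((hgm n).comp measurable_prodMk_left) (hg1 n ()))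

/-- Minkowski's integral inequality. -/
lemma eLpNorm_lintegral_le [SFinite μ] [IsFiniteMeasure ν] {F : X × Y → ℝ≥0∞} (hF : Measurable F)
    {p q : ℝ≥0∞} (h : p.HolderConjugate q) :
    eLpNorm (fun y => ∫⁻ x, F (x, y) ∂μ) p ν ≤ ∫⁻ x, eLpNorm (fun y => F (x, y)) p ν ∂μ := by
  refine eLpNorm_le_of_forall_lintegral_mul_le hF.lintegral_prod_left' h fun g hg hg1 => ?_
  calc ∫⁻ y, (∫⁻ x, F (x, y) ∂μ) * g y ∂ν = ∫⁻ y, ∫⁻ x, F (x, y) * g y ∂μ ∂ν := by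
        refine lintegral_congr fun y => ?_
        exact (lintegral_mul_const _ (hF.comp measurable_prodMk_right)).symm
    _ = ∫⁻ x, ∫⁻ y, F (x, y) * g y ∂ν ∂μ := by
        refine lintegral_lintegral_swap (f := fun y x => F (x, y) * g y) ?_
        exact ((hF.comp measurable_swap).mul (hg.comp measurable_fst)).aemeasurable
    _ ≤ ∫⁻ x, eLpNorm (fun y => F (x, y)) p ν ∂μ := by
        refine lintegral_mono fun x => ?_
        refine (lintegral_mul_le_eLpNorm h (hF.comp measurable_prodMk_left) hg).trans ?_
        exact mul_le_of_le_one_right' hg1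

end Extremizers

/-! ### Mixed norms: duality and contractivity of averages -/

section Mixed

variable {X Y : Type*} [MeasurableSpace X] [MeasurableSpace Y] {μ : Measure X} {ν : Measure Y}
  {v w v' w' : ℝ≥0∞}

/-- The mixed norm `L^v(μ; L^w(ν))` of a nonnegative function on a product. -/
def mixN (v w : ℝ≥0∞) (μ : Measure X) (ν : Measure Y) (F : X × Y → ℝ≥0∞) : ℝ≥0∞ :=
  eLpNorm (fun x => eLpNorm (fun y => F (x, y)) w ν) v μ

lemma mixN_le_mul {F G : X × Y → ℝ≥0∞} (c : NNReal) (h : ∀ z, F z ≤ c * G z) :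
    mixN v w μ ν F ≤ c * mixN v w μ ν G := by
  refine eLpNorm_le_nnreal_smul_eLpNorm_of_ae_le_mul' (ae_of_all _ fun x => ?_) _
  simp only [enorm_eq_self]
  exact eLpNorm_le_nnreal_smul_eLpNorm_of_ae_le_mul' (ae_of_all _ fun y => h (x, y)) _

lemma mixN_mono {F G : X × Y → ℝ≥0∞} (h : ∀ z, F z ≤ G z) :
    mixN v w μ ν F ≤ mixN v w μ ν G := by
  simpa using mixN_le_mul (v := v) (w := w) (μ := μ) (ν := ν) (F := F) (G := G) 1 (by simpa using h)

lemma mixN_add_le [SFinite ν] (hv : 1 ≤ v) (hw : 1 ≤ w) {F G : X × Y → ℝ≥0∞}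
    (hF : Measurable F) (hG : Measurable G) :
    mixN v w μ ν (fun z => F z + G z) ≤ mixN v w μ ν F + mixN v w μ ν G := by
  have hw0 : w ≠ 0 := (zero_lt_one.trans_le hw).ne'
  refine le_trans (eLpNorm_mono_enorm fun x => ?_)
    (eLpNorm_add_le (measurable_eLpNorm_section (ν := ν) hF hw0).aestronglyMeasurable
      (measurable_eLpNorm_section (ν := ν) hG hw0).aestronglyMeasurable hv)
  exact eLpNorm_add_le (hF.comp measurable_prodMk_left).aestronglyMeasurable
    (hG.comp measurable_prodMk_left).aestronglyMeasurable hw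

/-- Hölder's inequality for mixed norms. -/
lemma lintegral_mul_le_mixN [SFinite ν] (hv : v.HolderConjugate v')
    (hw : w.HolderConjugate w') {F G : X × Y → ℝ≥0∞} (hF : Measurable F) (hG : Measurable G) :
    ∫⁻ z, F z * G z ∂(μ.prod ν) ≤ mixN v w μ ν F * mixN v' w' μ ν G := by
  have hw0 : w ≠ 0 := (zero_lt_one.trans_le (HolderConjugate.one_le_left hw)).ne'
  have hw0' : w' ≠ 0 := (zero_lt_one.trans_le (HolderConjugate.one_le_left hw.symm)).ne'
  have hFG : AEMeasurable (fun z => F z * G z) (μ.prod ν) := (hF.mul hG).aemeasurable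
  rw [lintegral_prod _ hFG]
  refine le_trans (lintegral_mono fun x => ?_) (lintegral_mul_le_eLpNorm hv
    (measurable_eLpNorm_section hF hw0) (measurable_eLpNorm_section hG hw0'))
  exact lintegral_mul_le_eLpNorm hw (hF.comp measurable_prodMk_left)
    (hG.comp measurable_prodMk_left)

/-- The converse of Hölder's inequality for mixed norms: the inner norms are realized by norming
functions depending measurably on the outer variable, and Fatou's lemma passes to the limit. -/
lemma mixN_le_of_forall_lintegral_mul_le [IsFiniteMeasure μ] [IsFiniteMeasure ν]
    (hv : v.HolderConjugate v') (hw : w.HolderConjugate w') {F : X × Y → ℝ≥0∞}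
    (hF : Measurable F) {C : ℝ≥0∞}
    (hC : ∀ G : X × Y → ℝ≥0∞, Measurable G → mixN v' w' μ ν G ≤ 1 →
      ∫⁻ z, F z * G z ∂(μ.prod ν) ≤ C) :
    mixN v w μ ν F ≤ C := by
  have hw0 : w ≠ 0 := (zero_lt_one.trans_le (HolderConjugate.one_le_left hw)).ne'
  refine eLpNorm_le_of_forall_lintegral_mul_le (measurable_eLpNorm_section hF hw0) hv
    fun γ hγ hγ1 => ?_
  obtain ⟨g, hgm, hg1, hg⟩ := exists_norming_seq (ν := ν) hF hw
  have hG : ∀ n, ∫⁻ x, (∫⁻ y, F (x, y) * g n (x, y) ∂ν) * γ x ∂μ ≤ C := fun n => by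
    refine le_trans (le_of_eq ?_) (hC (fun z => g n z * γ z.1)
      ((hgm n).mul (hγ.comp measurable_fst)) ?_)
    · have hm : AEMeasurable (fun z : X × Y => F z * (g n z * γ z.1)) (μ.prod ν) :=
        (hF.mul ((hgm n).mul (hγ.comp measurable_fst))).aemeasurable
      rw [lintegral_prod _ hm]
      refine lintegral_congr fun x => ?_
      simp only [← mul_assoc]
      exact (lintegral_mul_const _ ((hF.mul (hgm n)).comp measurable_prodMk_left)).symm
    · refine le_trans (eLpNorm_mono_enorm fun x => ?_) hγ1
      simp only [enorm_eq_self]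
      -- Duality in one variable bounds the norm of a multiple, allowing the multiple to be `∞`.
      refine eLpNorm_le_of_forall_lintegral_mul_le
        (((hgm n).comp measurable_prodMk_left).mul_const (γ x)) hw.symm fun h hh hh1 => ?_
      calc ∫⁻ y, g n (x, y) * γ x * h y ∂ν = ∫⁻ y, (g n (x, y) * h y) * γ x ∂ν := by
            simp only [mul_right_comm]
        _ = (∫⁻ y, g n (x, y) * h y ∂ν) * γ x :=
            lintegral_mul_const _ (((hgm n).comp measurable_prodMk_left).mul hh)
        _ ≤ (1 * 1) * γ x := by
            gcongr
            exact (lintegral_mul_le_eLpNorm hw.symm ((hgm n).comp measurable_prodMk_left) hh).trans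
              (mul_le_mul' (hg1 n x) hh1)
        _ = γ x := by simp
  have hm : ∀ n, Measurable fun x => ∫⁻ y, F (x, y) * g n (x, y) ∂ν := fun n =>
    Measurable.lintegral_prod_right' (hF.mul (hgm n))
  calc ∫⁻ x, eLpNorm (fun y => F (x, y)) w ν * γ x ∂μ
      ≤ ∫⁻ x, liminf (fun n => (∫⁻ y, F (x, y) * g n (x, y) ∂ν) * γ x) atTop ∂μ := by
        refine lintegral_mono fun x => ?_
        have h1 := ENNReal.le_liminf_mul (f := atTop)
          (u := fun n => ∫⁻ y, F (x, y) * g n (x, y) ∂ν) (v := fun _ => γ x)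
        rw [liminf_const] at h1
        exact (mul_le_mul' (hg x) le_rfl).trans h1
    _ ≤ liminf (fun n => ∫⁻ x, (∫⁻ y, F (x, y) * g n (x, y) ∂ν) * γ x ∂μ) atTop :=
        lintegral_liminf_le fun n => (hm n).mul hγ
    _ ≤ C := by
        refine liminf_le_of_le (by isBoundedDefault) fun c hc => ?_
        obtain ⟨n, hn⟩ := hc.exists
        exact hn.trans (hG n)

/-- Averaging in the outer variable: Minkowski's inequality moves the average outside the inner
norm, and what remains is the average of a function of the outer variable. -/
lemma mixN_laverage_fst_le [IsFiniteMeasure μ] [IsFiniteMeasure ν] (hv : v.HolderConjugate v')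
    (hw : w.HolderConjugate w') {F : X × Y → ℝ≥0∞} (hF : Measurable F) :
    mixN v w μ ν (fun z => ⨍⁻ x, F (x, z.2) ∂μ) ≤ mixN v w μ ν F := by
  have hw0 : w ≠ 0 := (zero_lt_one.trans_le (HolderConjugate.one_le_left hw)).ne'
  refine le_trans (eLpNorm_mono_enorm fun x => ?_)
    (eLpNorm_const_laverage_le hv (measurable_eLpNorm_section (ν := ν) hF hw0))
  exact eLpNorm_lintegral_le hF hw

lemma mixN_laverage_snd_le [IsFiniteMeasure ν] (hw : w.HolderConjugate w')
    {F : X × Y → ℝ≥0∞} (hF : Measurable F) :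
    mixN v w μ ν (fun z => ⨍⁻ y, F (z.1, y) ∂ν) ≤ mixN v w μ ν F :=
  eLpNorm_mono_enorm fun x => by
    have hx : Measurable fun y => F (x, y) := hF.comp measurable_prodMk_left
    simpa only [enorm_eq_self] using eLpNorm_const_laverage_le (μ := ν) hw hx

lemma laverage_prod [IsFiniteMeasure μ] [IsFiniteMeasure ν] {F : X × Y → ℝ≥0∞}
    (hF : Measurable F) :
    ⨍⁻ z, F z ∂(μ.prod ν) = ⨍⁻ x, ⨍⁻ y, F (x, y) ∂ν ∂μ := by
  simp only [laverage_eq]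
  rw [lintegral_prod _ hF.aemeasurable, ← univ_prod_univ, Measure.prod_prod]
  simp only [div_eq_mul_inv]
  rw [lintegral_mul_const _ hF.lintegral_prod_right', mul_assoc,
    ENNReal.mul_inv (Or.inr (measure_ne_top _ _)) (Or.inl (measure_ne_top _ _)),
    mul_comm (μ univ)⁻¹]

lemma mixN_laverage_prod_le [IsFiniteMeasure μ] [IsFiniteMeasure ν] (hv : v.HolderConjugate v')
    (hw : w.HolderConjugate w') {F : X × Y → ℝ≥0∞} (hF : Measurable F) :
    mixN v w μ ν (fun _ => ⨍⁻ z, F z ∂(μ.prod ν)) ≤ mixN v w μ ν F := by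
  rw [laverage_prod hF]
  have hm : Measurable fun z : X × Y => ⨍⁻ y, F (z.1, y) ∂ν :=
    (Measurable.lintegral_prod_right' (ν := (ν univ)⁻¹ • ν) hF).comp measurable_fst
  exact (mixN_laverage_fst_le hv hw hm).trans (mixN_laverage_snd_le hw hF)

end Mixed

/-! ### The projection onto functions with vanishing marginals -/

section Oscillation

variable {X Y : Type*} [MeasurableSpace X] [MeasurableSpace Y] {μ : Measure X} {ν : Measure Y}
  {v w v' w' : ℝ≥0∞}

/-- The function `b` minus its averages in either variable plus its total average: the projection
onto functions with vanishing marginals. The averages are Bochner averages, so they have the junk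
value `0` on the null set of sections that are not integrable. -/
def biOsc (μ : Measure X) (ν : Measure Y) (b : X × Y → ℂ) (z : X × Y) : ℂ :=
  b z - ⨍ x, b (x, z.2) ∂μ - ⨍ y, b (z.1, y) ∂ν + ⨍ z, b z ∂(μ.prod ν)

lemma measurable_average_fst [IsFiniteMeasure μ] {b : X × Y → ℂ} (hb : Measurable b) :
    Measurable fun z : X × Y => ⨍ x, b (x, z.2) ∂μ :=
  (hb.stronglyMeasurable.integral_prod_left' (μ := (μ univ)⁻¹ • μ)).measurable.comp measurable_snd

lemma measurable_average_snd [IsFiniteMeasure ν] {b : X × Y → ℂ} (hb : Measurable b) :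
    Measurable fun z : X × Y => ⨍ y, b (z.1, y) ∂ν :=
  (hb.stronglyMeasurable.integral_prod_right' (ν := (ν univ)⁻¹ • ν)).measurable.comp measurable_fst

lemma measurable_biOsc [IsFiniteMeasure μ] [IsFiniteMeasure ν] {b : X × Y → ℂ}
    (hb : Measurable b) : Measurable (biOsc μ ν b) :=
  ((hb.sub (measurable_average_fst hb)).sub (measurable_average_snd hb)).add measurable_const

lemma enorm_average_le (f : X → ℂ) : ‖⨍ x, f x ∂μ‖ₑ ≤ ⨍⁻ x, ‖f x‖ₑ ∂μ :=
  enorm_integral_le_lintegral_enorm _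

lemma integral_sub_sub_add {f g h k : X → ℂ} (hf : Integrable f μ) (hg : Integrable g μ)
    (hh : Integrable h μ) (hk : Integrable k μ) :
    ∫ x, (f x - g x - h x + k x) ∂μ = ∫ x, f x ∂μ - ∫ x, g x ∂μ - ∫ x, h x ∂μ + ∫ x, k x ∂μ := by
  have h1 : Integrable (fun x => f x - g x) μ := hf.sub hg
  have h2 : Integrable (fun x => f x - g x - h x) μ := h1.sub hh
  rw [integral_add h2 hk, integral_sub h1 hh, integral_sub hf hg]

lemma mixN_average_snd_le [IsFiniteMeasure ν] (hw : w.HolderConjugate w')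
    {b : X × Y → ℂ} (hb : Measurable b) :
    mixN v w μ ν (fun z => ‖⨍ y, b (z.1, y) ∂ν‖ₑ) ≤ mixN v w μ ν (fun z => ‖b z‖ₑ) := by
  have hm : Measurable fun z => ‖b z‖ₑ := hb.enorm
  have h := mixN_laverage_snd_le (v := v) (μ := μ) (ν := ν) (F := fun z => ‖b z‖ₑ) hw hm
  exact (mixN_mono fun z => enorm_average_le fun y => b (z.1, y)).trans h

lemma integrable_mul_of_mixN [SFinite ν] (hv : v.HolderConjugate v')
    (hw : w.HolderConjugate w')
    {b f : X × Y → ℂ} (hb : Measurable b) (hf : Measurable f)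
    (hbN : mixN v w μ ν (fun z => ‖b z‖ₑ) < ∞) (hfN : mixN v' w' μ ν (fun z => ‖f z‖ₑ) < ∞) :
    Integrable (fun z => b z * f z) (μ.prod ν) := by
  refine ⟨(hb.mul hf).aestronglyMeasurable, ?_⟩
  rw [hasFiniteIntegral_iff_enorm]
  simp only [enorm_mul]
  exact (lintegral_mul_le_mixN hv hw hb.enorm hf.enorm).trans_lt (ENNReal.mul_lt_top hbN hfN)

variable [IsFiniteMeasure μ] [IsFiniteMeasure ν]

lemma mixN_average_fst_le (hv : v.HolderConjugate v') (hw : w.HolderConjugate w')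
    {b : X × Y → ℂ} (hb : Measurable b) :
    mixN v w μ ν (fun z => ‖⨍ x, b (x, z.2) ∂μ‖ₑ) ≤ mixN v w μ ν (fun z => ‖b z‖ₑ) := by
  have hm : Measurable fun z => ‖b z‖ₑ := hb.enorm
  have h := mixN_laverage_fst_le (μ := μ) (ν := ν) (F := fun z => ‖b z‖ₑ) hv hw hm
  exact (mixN_mono fun z => enorm_average_le fun x => b (x, z.2)).trans h

lemma mixN_average_prod_le (hv : v.HolderConjugate v') (hw : w.HolderConjugate w')
    {b : X × Y → ℂ} (hb : Measurable b) :
    mixN v w μ ν (fun _ => ‖⨍ z, b z ∂(μ.prod ν)‖ₑ) ≤ mixN v w μ ν (fun z => ‖b z‖ₑ) :=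
  (mixN_mono (G := fun _ => ⨍⁻ z, ‖b z‖ₑ ∂(μ.prod ν))
    fun _ => enorm_average_le _).trans (mixN_laverage_prod_le hv hw hb.enorm)

lemma mixN_biOsc_le (hv : v.HolderConjugate v') (hw : w.HolderConjugate w')
    {b : X × Y → ℂ} (hb : Measurable b) :
    mixN v w μ ν (fun z => ‖biOsc μ ν b z‖ₑ) ≤ 4 * mixN v w μ ν (fun z => ‖b z‖ₑ) := by
  have h1v := HolderConjugate.one_le_left hv
  have h1w := HolderConjugate.one_le_left hw
  have m1 := (measurable_average_fst (μ := μ) hb).enorm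
  have m2 := (measurable_average_snd (ν := ν) hb).enorm
  calc mixN v w μ ν (fun z => ‖biOsc μ ν b z‖ₑ)
      ≤ mixN v w μ ν (fun z => ‖b z‖ₑ + ‖⨍ x, b (x, z.2) ∂μ‖ₑ + ‖⨍ y, b (z.1, y) ∂ν‖ₑ
          + ‖⨍ z, b z ∂(μ.prod ν)‖ₑ) := by
        refine mixN_mono fun z => (enorm_add_le _ _).trans ?_
        gcongr
        refine enorm_sub_le.trans ?_
        gcongr
        exact enorm_sub_le
    _ ≤ mixN v w μ ν (fun z => ‖b z‖ₑ) + mixN v w μ ν (fun z => ‖⨍ x, b (x, z.2) ∂μ‖ₑ)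
          + mixN v w μ ν (fun z => ‖⨍ y, b (z.1, y) ∂ν‖ₑ)
          + mixN v w μ ν (fun _ => ‖⨍ z, b z ∂(μ.prod ν)‖ₑ) := by
        refine (mixN_add_le h1v h1w ((hb.enorm.add m1).add m2) measurable_const).trans ?_
        gcongr
        refine (mixN_add_le h1v h1w (hb.enorm.add m1) m2).trans ?_
        gcongr
        exact mixN_add_le h1v h1w hb.enorm m1
    _ ≤ _ := by
        have h1 := mixN_average_fst_le (μ := μ) (ν := ν) hv hw hb
        have h2 := mixN_average_snd_le (v := v) (μ := μ) (ν := ν) hw hb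
        have h3 := mixN_average_prod_le (μ := μ) (ν := ν) hv hw hb
        refine (add_le_add (add_le_add (add_le_add le_rfl h1) h2) h3).trans (le_of_eq ?_)
        ring

lemma mixN_one_lt_top : mixN v w μ ν (fun _ => 1) < ∞ :=
  (memLp_const_enorm (p := v) (μ := μ) (c := eLpNorm (fun _ : Y => (1 : ℝ≥0∞)) w ν)
    (memLp_const_enorm (p := w) (μ := ν) (c := (1 : ℝ≥0∞)) (by simp)).2.ne).2

lemma integrable_of_mixN (hv : v.HolderConjugate v') (hw : w.HolderConjugate w')
    {b : X × Y → ℂ} (hb : Measurable b) (hbN : mixN v w μ ν (fun z => ‖b z‖ₑ) < ∞) :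
    Integrable b (μ.prod ν) := by
  simpa using integrable_mul_of_mixN hv hw hb (measurable_const (a := (1 : ℂ))) hbN (by
    simpa using mixN_one_lt_top)

lemma integral_mul_average_fst {b f : X × Y → ℂ}
    (h1 : Integrable (fun z => b z * ⨍ x, f (x, z.2) ∂μ) (μ.prod ν))
    (h2 : Integrable (fun z => (⨍ x, b (x, z.2) ∂μ) * f z) (μ.prod ν)) :
    ∫ z, b z * ⨍ x, f (x, z.2) ∂μ ∂(μ.prod ν) = ∫ z, (⨍ x, b (x, z.2) ∂μ) * f z ∂(μ.prod ν) := by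
  rw [integral_prod_symm _ h1, integral_prod_symm _ h2]
  refine integral_congr_ae (ae_of_all _ fun y => ?_)
  dsimp only
  rw [integral_mul_const, integral_const_mul]
  simp only [average_eq, smul_mul_assoc, mul_smul_comm]

lemma integral_mul_average_snd {b f : X × Y → ℂ}
    (h1 : Integrable (fun z => b z * ⨍ y, f (z.1, y) ∂ν) (μ.prod ν))
    (h2 : Integrable (fun z => (⨍ y, b (z.1, y) ∂ν) * f z) (μ.prod ν)) :
    ∫ z, b z * ⨍ y, f (z.1, y) ∂ν ∂(μ.prod ν) = ∫ z, (⨍ y, b (z.1, y) ∂ν) * f z ∂(μ.prod ν) := by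
  rw [integral_prod _ h1, integral_prod _ h2]
  refine integral_congr_ae (ae_of_all _ fun y => ?_)
  dsimp only
  rw [integral_mul_const, integral_const_mul]
  simp only [average_eq, smul_mul_assoc, mul_smul_comm]

/-- `biOsc` is symmetric for the bilinear pairing of dual mixed-norm spaces. -/
lemma integral_mul_biOsc (hv : v.HolderConjugate v') (hw : w.HolderConjugate w')
    {b f : X × Y → ℂ} (hb : Measurable b) (hf : Measurable f)
    (hbN : mixN v w μ ν (fun z => ‖b z‖ₑ) < ∞) (hfN : mixN v' w' μ ν (fun z => ‖f z‖ₑ) < ∞) :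
    ∫ z, b z * biOsc μ ν f z ∂(μ.prod ν) = ∫ z, biOsc μ ν b z * f z ∂(μ.prod ν) := by
  have i0 := integrable_mul_of_mixN hv hw hb hf hbN hfN
  have i1 := integrable_mul_of_mixN hv hw hb (measurable_average_fst (μ := μ) hf) hbN
    ((mixN_average_fst_le hv.symm hw.symm hf).trans_lt hfN)
  have i2 := integrable_mul_of_mixN hv hw hb (measurable_average_snd (ν := ν) hf) hbN
    ((mixN_average_snd_le hw.symm hf).trans_lt hfN)
  have i3 := integrable_mul_of_mixN hv hw hb
    (measurable_const (a := ⨍ z, f z ∂(μ.prod ν))) hbN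
    ((mixN_average_prod_le hv.symm hw.symm hf).trans_lt hfN)
  have j1 := integrable_mul_of_mixN hv hw (measurable_average_fst (μ := μ) hb) hf
    ((mixN_average_fst_le hv hw hb).trans_lt hbN) hfN
  have j2 := integrable_mul_of_mixN hv hw (measurable_average_snd (ν := ν) hb) hf
    ((mixN_average_snd_le hw hb).trans_lt hbN) hfN
  have j3 := integrable_mul_of_mixN hv hw
    (measurable_const (a := ⨍ z, b z ∂(μ.prod ν))) hf
    ((mixN_average_prod_le hv hw hb).trans_lt hbN) hfN
  simp only [biOsc, mul_add, mul_sub, add_mul, sub_mul]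
  rw [integral_sub_sub_add i0 i1 i2 i3, integral_sub_sub_add i0 j1 j2 j3,
    integral_mul_average_fst i1 j1, integral_mul_average_snd i2 j2, integral_mul_const,
    integral_const_mul]
  simp only [average_eq, smul_mul_assoc, mul_smul_comm]

lemma biOsc_ae_eq_self {f : X × Y → ℂ} (hf : Integrable f (μ.prod ν))
    (h1 : ∀ᵐ y ∂ν, ∫ x, f (x, y) ∂μ = 0) (h2 : ∀ᵐ x ∂μ, ∫ y, f (x, y) ∂ν = 0) :
    biOsc μ ν f =ᵐ[μ.prod ν] f := by
  have h3 : ∫ z, f z ∂(μ.prod ν) = 0 := by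
    rw [integral_prod _ hf, integral_congr_ae h2, integral_zero]
  filter_upwards [Measure.quasiMeasurePreserving_snd.ae h1,
    Measure.quasiMeasurePreserving_fst.ae h2] with z hz1 hz2
  simp [biOsc, average_eq, h3, hz1, hz2]

lemma average_prod_eq {f : X × Y → ℂ} (hf : Integrable f (μ.prod ν)) :
    ⨍ z, f z ∂(μ.prod ν) = ⨍ x, ⨍ y, f (x, y) ∂ν ∂μ := by
  simp only [average_eq]
  rw [integral_prod _ hf, integral_smul, smul_smul, ← univ_prod_univ, measureReal_prod_prod,
    mul_inv]

lemma average_prod_eq_symm {f : X × Y → ℂ} (hf : Integrable f (μ.prod ν)) :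
    ⨍ z, f z ∂(μ.prod ν) = ⨍ y, ⨍ x, f (x, y) ∂μ ∂ν := by
  simp only [average_eq]
  rw [integral_prod_symm _ hf, integral_smul, smul_smul, ← univ_prod_univ, measureReal_prod_prod,
    mul_inv, mul_comm]

lemma integral_biOsc_fst [NeZero μ] {f : X × Y → ℂ} (hf : Integrable f (μ.prod ν)) :
    ∀ᵐ y ∂ν, ∫ x, biOsc μ ν f (x, y) ∂μ = 0 := by
  have h2 : Integrable (fun x => ⨍ y, f (x, y) ∂ν) μ := by
    simp only [average_eq]
    exact hf.integral_prod_left.smul _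
  filter_upwards [hf.prod_left_ae] with y hy
  simp only [biOsc]
  rw [integral_sub_sub_add hy (integrable_const _) h2 (integrable_const _), integral_average,
    average_prod_eq hf, integral_average]
  ring

lemma integral_biOsc_snd [NeZero ν] {f : X × Y → ℂ} (hf : Integrable f (μ.prod ν)) :
    ∀ᵐ x ∂μ, ∫ y, biOsc μ ν f (x, y) ∂ν = 0 := by
  have h2 : Integrable (fun y => ⨍ x, f (x, y) ∂μ) ν := by
    simp only [average_eq]
    exact hf.integral_prod_right.smul _
  filter_upwards [hf.prod_right_ae] with x hx
  simp only [biOsc]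
  rw [integral_sub_sub_add hx h2 (integrable_const _) (integrable_const _), integral_average,
    average_prod_eq_symm hf, integral_average]
  ring

/-- Pairing `b` with a function of vanishing marginals only sees `biOsc b`. -/
lemma enorm_integral_mul_le_mixN_biOsc (hv : v.HolderConjugate v') (hw : w.HolderConjugate w')
    {b f : X × Y → ℂ} (hb : Measurable b) (hf : Measurable f)
    (hbN : mixN v w μ ν (fun z => ‖b z‖ₑ) < ∞) (hfN : mixN v' w' μ ν (fun z => ‖f z‖ₑ) ≤ 1)
    (h1 : ∀ᵐ y ∂ν, ∫ x, f (x, y) ∂μ = 0) (h2 : ∀ᵐ x ∂μ, ∫ y, f (x, y) ∂ν = 0) :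
    ‖∫ z, b z * f z ∂(μ.prod ν)‖ₑ ≤ mixN v w μ ν (fun z => ‖biOsc μ ν b z‖ₑ) := by
  have hfN' := hfN.trans_lt ENNReal.one_lt_top
  have hae := biOsc_ae_eq_self (integrable_of_mixN hv.symm hw.symm hf hfN') h1 h2
  have : ∫ z, b z * f z ∂(μ.prod ν) = ∫ z, biOsc μ ν b z * f z ∂(μ.prod ν) := by
    rw [← integral_mul_biOsc hv hw hb hf hbN hfN']
    refine integral_congr_ae ?_
    filter_upwards [hae] with z hz
    rw [hz]
  rw [this]
  refine (enorm_integral_le_lintegral_enorm _).trans ?_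
  simp only [enorm_mul]
  refine (lintegral_mul_le_mixN hv hw (measurable_biOsc hb).enorm hf.enorm).trans ?_
  exact (mul_le_mul' le_rfl hfN).trans_eq (mul_one _)

/-- The oscillation is at most four times any bound for the pairings with the admissible test
functions. The test functions used are `biOsc f₀ / 4`, where `f₀` ranges over the multiples
of the conjugate phase of `biOsc b` by nonnegative functions in the dual unit ball. -/
lemma mixN_biOsc_le_of_forall [NeZero μ] [NeZero ν] (hv : v.HolderConjugate v')
    (hw : w.HolderConjugate w') {b : X × Y → ℂ} (hb : Measurable b)
    (hbN : mixN v w μ ν (fun z => ‖b z‖ₑ) < ∞) {S : ℝ≥0∞}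
    (hS : ∀ f : X × Y → ℂ, Measurable f → mixN v' w' μ ν (fun z => ‖f z‖ₑ) ≤ 1 →
      (∀ᵐ y ∂ν, ∫ x, f (x, y) ∂μ = 0) → (∀ᵐ x ∂μ, ∫ y, f (x, y) ∂ν = 0) →
      ‖∫ z, b z * f z ∂(μ.prod ν)‖ₑ ≤ S) :
    mixN v w μ ν (fun z => ‖biOsc μ ν b z‖ₑ) ≤ 4 * S := by
  have hB := measurable_biOsc (μ := μ) (ν := ν) hb
  refine mixN_le_of_forall_lintegral_mul_le hv hw hB.enorm fun G hG hG1 => ?_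
  have hGfin : ∀ᵐ z ∂(μ.prod ν), G z < ∞ := by
    refine ae_lt_top hG ?_
    have := lintegral_mul_le_mixN (μ := μ) (ν := ν) hv.symm hw.symm hG
      (measurable_const (a := (1 : ℝ≥0∞)))
    simp only [mul_one] at this
    exact (this.trans_lt (ENNReal.mul_lt_top (hG1.trans_lt one_lt_top) mixN_one_lt_top)).ne
  set B : X × Y → ℂ := biOsc μ ν b with hBdef
  -- The conjugate phase of `B`, times `G`.
  set f₀ : X × Y → ℂ := fun z => (starRingEnd ℂ (B z) * (‖B z‖⁻¹ : ℝ)) * ((G z).toReal : ℂ)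
    with hf₀
  have hf₀m : Measurable f₀ := by
    refine Measurable.mul (Measurable.mul ?_ ?_) ?_
    · exact Complex.continuous_conj.measurable.comp hB
    · exact Complex.measurable_ofReal.comp hB.norm.inv
    · exact Complex.measurable_ofReal.comp hG.ennreal_toReal
  have hf₀G : ∀ z, ‖f₀ z‖ₑ ≤ G z := fun z => by
    have h1 : ‖f₀ z‖ ≤ (G z).toReal := by
      simp only [hf₀, norm_mul, RCLike.norm_conj, Complex.norm_real, norm_inv, norm_norm,
        Real.norm_of_nonneg ENNReal.toReal_nonneg]
      exact mul_le_of_le_one_left ENNReal.toReal_nonneg mul_inv_le_one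
    rw [← ofReal_norm]
    exact (ENNReal.ofReal_le_ofReal h1).trans ENNReal.ofReal_toReal_le
  have hf₀N : mixN v' w' μ ν (fun z => ‖f₀ z‖ₑ) ≤ 1 := (mixN_mono hf₀G).trans hG1
  have hf₀N' := hf₀N.trans_lt one_lt_top
  have hf₀i := integrable_of_mixN hv.symm hw.symm hf₀m hf₀N'
  have hprod : ∀ z, B z * f₀ z = ((‖B z‖ * (G z).toReal : ℝ) : ℂ) := fun z => by
    rcases eq_or_ne (B z) 0 with h0 | h0
    · simp [hf₀, h0]
    · have : (‖B z‖ : ℂ) ≠ 0 := by simpa using h0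
      simp only [hf₀]
      rw [← mul_assoc, ← mul_assoc, Complex.mul_conj, Complex.normSq_eq_norm_sq]
      push_cast
      field_simp
  have hint : ∫⁻ z, ‖B z‖ₑ * G z ∂(μ.prod ν) = ‖∫ z, B z * f₀ z ∂(μ.prod ν)‖ₑ := by
    have hi : Integrable (fun z => ‖B z‖ * (G z).toReal) (μ.prod ν) := by
      have := integrable_mul_of_mixN hv hw hB hf₀m ((mixN_biOsc_le hv hw hb).trans_lt
        (ENNReal.mul_lt_top (by simp) hbN)) hf₀N'
      have h2 := this.norm
      refine h2.congr (ae_of_all _ fun z => ?_)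
      dsimp only
      rw [hprod, Complex.norm_real, Real.norm_of_nonneg (by positivity)]
    simp only [hprod]
    rw [integral_complex_ofReal, ← ofReal_norm, Complex.norm_real,
      Real.norm_of_nonneg (integral_nonneg fun z => by positivity),
      ofReal_integral_eq_lintegral_ofReal hi (ae_of_all _ fun z => by positivity)]
    refine lintegral_congr_ae ?_
    filter_upwards [hGfin] with z hz
    rw [ENNReal.ofReal_mul (norm_nonneg _), ENNReal.ofReal_toReal hz.ne, ofReal_norm]
  have h4 : ‖(4⁻¹ : ℂ)‖ₑ = ((4⁻¹ : NNReal) : ℝ≥0∞) := by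
    rw [enorm_eq_nnnorm]; norm_num
  have key := hS (fun z => 4⁻¹ * biOsc μ ν f₀ z) ((measurable_biOsc hf₀m).const_mul _) ?_ ?_ ?_
  · have : ∫ z, b z * (4⁻¹ * biOsc μ ν f₀ z) ∂(μ.prod ν)
        = 4⁻¹ * ∫ z, B z * f₀ z ∂(μ.prod ν) := by
      rw [← integral_mul_biOsc hv hw hb hf₀m hbN hf₀N', ← integral_const_mul]
      exact integral_congr_ae (ae_of_all _ fun z => by ring)
    rw [this, enorm_mul, ← hint, h4] at key
    calc ∫⁻ z, ‖B z‖ₑ * G z ∂(μ.prod ν)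
        = 4 * (((4⁻¹ : NNReal) : ℝ≥0∞) * ∫⁻ z, ‖B z‖ₑ * G z ∂(μ.prod ν)) := by
          rw [← mul_assoc, ENNReal.coe_inv (by norm_num)]
          simp [ENNReal.mul_inv_cancel]
      _ ≤ 4 * S := by gcongr
  · refine (mixN_le_mul 4⁻¹ (G := fun z => ‖biOsc μ ν f₀ z‖ₑ) fun z => ?_).trans ?_
    · rw [enorm_mul, h4]
    · refine (mul_le_mul' le_rfl ((mixN_biOsc_le hv.symm hw.symm hf₀m).trans
        (mul_le_mul' le_rfl hf₀N))).trans (le_of_eq ?_)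
      rw [ENNReal.coe_inv (by norm_num)]
      simp [ENNReal.inv_mul_cancel]
  · filter_upwards [integral_biOsc_fst hf₀i] with y hy
    rw [integral_const_mul, hy, mul_zero]
  · filter_upwards [integral_biOsc_snd hf₀i] with x hx
    rw [integral_const_mul, hx, mul_zero]

end Oscillation

/-! ### Cubes carry finite nonzero measures -/

section Cubes

lemma Cube.measurableSet_carrier {d : ℕ} (I : Cube d) : MeasurableSet I.carrier := by
  have : I.carrier = ⋂ i, {x : Euc d | |x i - I.center i| ≤ I.side / 2} := by
    ext x; simp [Cube.carrier]
  rw [this]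
  refine MeasurableSet.iInter fun i => ?_
  exact (isClosed_le (by fun_prop) continuous_const).measurableSet

lemma Cube.volume_carrier_lt_top {d : ℕ} (I : Cube d) : volume I.carrier < ⊤ := by
  have h : I.carrier ⊆ (WithLp.ofLp : Euc d → Fin d → ℝ) ⁻¹'
      (univ.pi fun i => Metric.closedBall (I.center i) (I.side / 2)) := by
    intro x hx i _
    simpa [Real.dist_eq] using hx i
  refine (measure_mono h).trans_lt ?_
  rw [(PiLp.volume_preserving_ofLp (Fin d)).measure_preimage
    (MeasurableSet.univ_pi fun i => Metric.isClosed_closedBall.measurableSet).nullMeasurableSet,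
    volume_pi, Measure.pi_pi]
  exact ENNReal.prod_lt_top fun i _ => measure_closedBall_lt_top

lemma Cube.volume_carrier_ne_zero {d : ℕ} (I : Cube d) : volume I.carrier ≠ 0 := by
  have h : Metric.ball I.center (I.side / 2) ⊆ I.carrier := by
    intro x hx i
    have h1 : ‖(x - I.center) i‖ ≤ ‖x - I.center‖ := PiLp.norm_apply_le _ i
    rw [Metric.mem_ball, dist_eq_norm] at hx
    rw [Real.norm_eq_abs] at h1
    exact h1.trans hx.le
  have h0 := Metric.measure_ball_pos volume I.center (half_pos I.side_pos)
  exact (h0.trans_le (measure_mono h)).ne'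

instance {d : ℕ} (I : Cube d) : IsFiniteMeasure (volume.restrict I.carrier) :=
  ⟨by simpa using I.volume_carrier_lt_top⟩

instance {d : ℕ} (I : Cube d) : NeZero (volume.restrict I.carrier) :=
  ⟨by simpa [Measure.restrict_eq_zero] using I.volume_carrier_ne_zero⟩

end Cubes

/-! ### Mixed norms and oscillations over a rectangle -/

section Translation

variable {d1 d2 : ℕ}

lemma lpNormENN_eq_eLpNorm {α : Type*} [MeasurableSpace α] {μ : Measure α} {p : ℝ≥0∞}
    (hp : p ≠ 0) (g : α → ℝ≥0∞) : lpNormENN μ p g = eLpNorm g p μ := by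
  unfold lpNormENN
  split_ifs with h
  · subst h
    simp [eLpNormEssSup]
  · rw [eLpNorm_eq_lintegral_rpow_enorm_toReal hp h]
    simp

/-- The mixed norm of a function cut off to a rectangle is the mixed norm with respect to the
restricted measures. -/
lemma mixedNorm_indicator {p q : ℝ≥0∞} (hp : p ≠ 0) (hq : q ≠ 0) (I1 : Cube d1) (I2 : Cube d2)
    (F : Euc d1 × Euc d2 → ℂ) :
    mixedNorm p q ((I1.carrier ×ˢ I2.carrier).indicator F) =
      mixN p q (volume.restrict I1.carrier) (volume.restrict I2.carrier) (fun z => ‖F z‖ₑ) := by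
  unfold mixedNorm mixN
  rw [lpNormENN_eq_eLpNorm hp,
    ← eLpNorm_indicator_eq_eLpNorm_restrict I1.measurableSet_carrier]
  congr 1
  funext x
  rw [lpNormENN_eq_eLpNorm hq]
  by_cases hx : x ∈ I1.carrier
  · rw [indicator_of_mem hx, ← eLpNorm_indicator_eq_eLpNorm_restrict I2.measurableSet_carrier]
    congr 1
    funext y
    by_cases hy : y ∈ I2.carrier <;> simp [indicator, hx, hy, enorm_eq_nnnorm]
  · rw [indicator_of_notMem hx]
    have : (fun y => ((‖(I1.carrier ×ˢ I2.carrier).indicator F (x, y)‖₊ : ℝ≥0∞))) = 0 := by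
      funext y
      simp [indicator, hx]
    rw [this, eLpNorm_zero]

lemma restrict_prod_carrier (I1 : Cube d1) (I2 : Cube d2) :
    (volume : Measure (Euc d1 × Euc d2)).restrict (I1.carrier ×ˢ I2.carrier) =
      (volume.restrict I1.carrier).prod (volume.restrict I2.carrier) := by
  rw [Measure.prod_restrict, Measure.volume_eq_prod]

lemma oscMixed_eq {p q : ℝ≥0∞} (hp : p ≠ 0) (hq : q ≠ 0) (I1 : Cube d1) (I2 : Cube d2)
    (b : Euc d1 × Euc d2 → ℂ) :
    oscMixed p q b I1 I2 =
      mixN p q (volume.restrict I1.carrier) (volume.restrict I2.carrier)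
        (fun z => ‖biOsc (volume.restrict I1.carrier) (volume.restrict I2.carrier) b z‖ₑ) := by
  unfold oscMixed
  rw [mixedNorm_indicator hp hq]
  congr 1
  funext z
  unfold biOsc avgFst avgSnd avgRect
  rw [← restrict_prod_carrier, setAverage_eq, setAverage_eq, setAverage_eq]
  rfl

end Translation

end Helpers

theorem statement11 (d1 d2 : ℕ) (hd1 : 1 ≤ d1) (hd2 : 1 ≤ d2)
    (v1 v2 v1' v2' : ℝ≥0∞) (hv1 : 1 ≤ v1) (hv2 : 1 ≤ v2)
    (hv1' : 1 / v1 + 1 / v1' = 1) (hv2' : 1 / v2 + 1 / v2' = 1)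
    (I1 : Cube d1) (I2 : Cube d2) (b : Euc d1 × Euc d2 → ℂ) (hb : Measurable b)
    (hfin : mixedNorm v1 v2 ((I1.carrier ×ˢ I2.carrier).indicator b) < ⊤) :
    (⨆ (f : Euc d1 × Euc d2 → ℂ) (_ : Measurable f)
        (_ : ∀ x, x ∉ I1.carrier ×ˢ I2.carrier → f x = 0)
        (_ : mixedNorm v1' v2' f ≤ 1)
        (_ : ∀ᵐ x2 ∂(volume : Measure (Euc d2)), ∫ y1 in I1.carrier, f (y1, x2) = 0)
        (_ : ∀ᵐ x1 ∂(volume : Measure (Euc d1)), ∫ y2 in I2.carrier, f (x1, y2) = 0),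
        (‖∫ x in I1.carrier ×ˢ I2.carrier, b x * f x‖₊ : ℝ≥0∞))
      ≤ oscMixed v1 v2 b I1 I2 ∧
    oscMixed v1 v2 b I1 I2 ≤ 4 *
      ⨆ (f : Euc d1 × Euc d2 → ℂ) (_ : Measurable f)
        (_ : ∀ x, x ∉ I1.carrier ×ˢ I2.carrier → f x = 0)
        (_ : mixedNorm v1' v2' f ≤ 1)
        (_ : ∀ᵐ x2 ∂(volume : Measure (Euc d2)), ∫ y1 in I1.carrier, f (y1, x2) = 0)
        (_ : ∀ᵐ x1 ∂(volume : Measure (Euc d1)), ∫ y2 in I2.carrier, f (x1, y2) = 0),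
        (‖∫ x in I1.carrier ×ˢ I2.carrier, b x * f x‖₊ : ℝ≥0∞) := by
  have hv : v1.HolderConjugate v1' := by
    rw [ENNReal.holderConjugate_iff]; simpa only [one_div] using hv1'
  have hw : v2.HolderConjugate v2' := by
    rw [ENNReal.holderConjugate_iff]; simpa only [one_div] using hv2'
  have hp : v1 ≠ 0 := (zero_lt_one.trans_le hv1).ne'
  have hq : v2 ≠ 0 := (zero_lt_one.trans_le hv2).ne'
  have hp' : v1' ≠ 0 := (zero_lt_one.trans_le (HolderConjugate.one_le_left hv.symm)).ne'
  have hq' : v2' ≠ 0 := (zero_lt_one.trans_le (HolderConjugate.one_le_left hw.symm)).ne'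
  have hR : MeasurableSet (I1.carrier ×ˢ I2.carrier) :=
    I1.measurableSet_carrier.prod I2.measurableSet_carrier
  rw [mixedNorm_indicator hp hq] at hfin
  rw [oscMixed_eq hp hq]
  constructor
  · refine iSup_le fun f => iSup_le fun hf => iSup_le fun hsupp => iSup_le fun hfN =>
      iSup_le fun h1 => iSup_le fun h2 => ?_
    have hfR : (I1.carrier ×ˢ I2.carrier).indicator f = f := by
      funext x
      by_cases hx : x ∈ I1.carrier ×ˢ I2.carrier
      · exact indicator_of_mem hx f
      · rw [indicator_of_notMem hx, hsupp x hx]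
    rw [← hfR, mixedNorm_indicator hp' hq'] at hfN
    rw [restrict_prod_carrier]
    exact enorm_integral_mul_le_mixN_biOsc hv hw hb hf hfin hfN
      (ae_restrict_of_ae h1) (ae_restrict_of_ae h2)
  · refine mixN_biOsc_le_of_forall hv hw hb hfin fun f hf hfN h1 h2 => ?_
    -- A test function for the restricted measures is cut off to the rectangle.
    set g := (I1.carrier ×ˢ I2.carrier).indicator f with hg
    have hgN : mixedNorm v1' v2' g ≤ 1 := by rwa [hg, mixedNorm_indicator hp' hq']
    have hg1 : ∀ᵐ x2 ∂(volume : Measure (Euc d2)), ∫ y1 in I1.carrier, g (y1, x2) = 0 := by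
      rw [ae_restrict_iff' I2.measurableSet_carrier] at h1
      filter_upwards [h1] with y hy
      by_cases hyI : y ∈ I2.carrier
      · rw [← hy hyI]
        exact setIntegral_congr_fun I1.measurableSet_carrier fun x hx =>
          indicator_of_mem (mk_mem_prod hx hyI) f
      · simp [hg, hyI]
    have hg2 : ∀ᵐ x1 ∂(volume : Measure (Euc d1)), ∫ y2 in I2.carrier, g (x1, y2) = 0 := by
      rw [ae_restrict_iff' I1.measurableSet_carrier] at h2
      filter_upwards [h2] with x hx
      by_cases hxI : x ∈ I1.carrier
      · rw [← hx hxI]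
        exact setIntegral_congr_fun I2.measurableSet_carrier fun y hy =>
          indicator_of_mem (mk_mem_prod hxI hy) f
      · simp [hg, hxI]
    have hint : ∫ z, b z * f z ∂((volume.restrict I1.carrier).prod (volume.restrict I2.carrier)) =
        ∫ z in I1.carrier ×ˢ I2.carrier, b z * g z := by
      rw [← restrict_prod_carrier]
      exact setIntegral_congr_fun hR fun z hz => by
        simp only [hg, indicator_of_mem hz]
    rw [hint]
    exact le_iSup_of_le g <| le_iSup_of_le (hf.indicator hR) <|
      le_iSup_of_le (fun x hx => indicator_of_notMem hx f) <| le_iSup_of_le hgN <|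
      le_iSup_of_le hg1 <| le_iSup_of_le hg2 le_rfl
end
end
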